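/- arXiv:2406.15924 — 3 statements merged into one kernel-verified Lean document; each statement's English description precedes it below -/
import Mathlib

section
/- Let m > 0 and let q : ℂ² → ℂ be a quadratic form (a homogeneous polynomial of degree 2 in two complex variables) such that the set {q(x,ξ) : (x,ξ) ∈ ℝ²} is not all of ℂ and q(x,ξ) ≠ 0 for every (x,ξ) ∈ ℝ² \ {(0,0)}. Let p be holomorphic on an open neighbourhood of 0 ∈ ℂ² with p(w) = q(w) + O(|w|³) as w → 0. Then there exist ε > 0, a holomorphic map F : B(0,ε) ⊆ ℂ² → ℂ² with F(0) = 0 and derivative DF(0) = Id, and a holomorphic function f on a neighbourhood of 0 ∈ ℂ with f(0) = 1, such that for all w ∈ B(0,ε): p(F(w)) = q(w), and the determinant of the complex derivative DF(w) equals f(q(w)). (Vey's Morse lemma in dimension two: F pulls p back to its quadratic part and pulls the symplectic form dξ∧dx back to f(q) dζ∧dz.) -/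
open Complex Metric Asymptotics

/-!
Near a nondegenerate quadratic form, `p` becomes `α x² + β x y + γ y²` after a linear change of
variables and two applications of Hadamard's lemma, with `α`, `β`, `γ` analytic and equal to
`0`, `1`, `0` at the origin. This quadratic splits into a product `Φ₁ Φ₂` with `Φ` tangent to the
identity, and the local inverse `G` of `Φ` satisfies `p ∘ G = x y`.

The Jacobian `J` of `G` is then corrected by a map which preserves `x y`. With
`D = x ∂/∂x - y ∂/∂y`, the homological equation `J = f (x y) + D v` is solved on power series by
dividing the coefficient of `xⁱ yʲ`, `i ≠ j`, by `i - j`. Put `u = v / f (x y)`; since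
`D (x y) = 0`, this gives `J = f (x y) (1 + D u)`. The time-`u` map `K` of the Hamiltonian flow
of `x y` preserves `x y` and has Jacobian `1 + D u`, so `G ∘ K⁻¹` has Jacobian `f (x y)`.
-/

namespace Vey

open Filter Topology Finset.HasAntidiagonal

section BivariateSeries

variable {𝕜 E : Type*} [NontriviallyNormedField 𝕜] [NormedAddCommGroup E] [NormedSpace 𝕜 E]
  {c : ℕ × ℕ → E} {r M ρ : ℝ} {w : 𝕜 × 𝕜}

/-- The term `x ^ i y ^ j c i j` of the power series in two variables with coefficients `c`. -/
def bivariateTerm (c : ℕ × ℕ → E) (w : 𝕜 × 𝕜) (ij : ℕ × ℕ) : E :=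
  (w.1 ^ ij.1 * w.2 ^ ij.2) • c ij

/-- The sum of the power series in two variables with coefficients `c`; it is `0` where the series
does not converge. -/
noncomputable def bivariateSum (c : ℕ × ℕ → E) (w : 𝕜 × 𝕜) : E :=
  ∑' ij, bivariateTerm c w ij

/-- Cauchy's estimates on the bidisc of radius `r`, with bound `M`, for the coefficients `c` of a
power series in two variables. -/
def CauchyEstimates (c : ℕ × ℕ → E) (r M : ℝ) : Prop :=
  ∀ i j, ‖c (i, j)‖ * r ^ (i + j) ≤ M

lemma CauchyEstimates.nonneg (hc : CauchyEstimates c r M) : 0 ≤ M :=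
  (norm_nonneg (c (0, 0))).trans (by simpa using hc 0 0)

lemma norm_bivariateTerm_le (hr : 0 < r) (hc : CauchyEstimates c r M) (hw : ‖w‖ ≤ ρ)
    (ij : ℕ × ℕ) : ‖bivariateTerm c w ij‖ ≤ M * ((ρ / r) ^ ij.1 * (ρ / r) ^ ij.2) := by
  have hρ : 0 ≤ ρ := (norm_nonneg w).trans hw
  calc ‖bivariateTerm c w ij‖ = ‖w.1‖ ^ ij.1 * ‖w.2‖ ^ ij.2 * ‖c ij‖ := by
        rw [bivariateTerm, norm_smul, norm_mul, norm_pow, norm_pow]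
    _ ≤ ρ ^ ij.1 * ρ ^ ij.2 * ‖c ij‖ := by
        gcongr
        exacts [(norm_fst_le w).trans hw, (norm_snd_le w).trans hw]
    _ = ‖c ij‖ * r ^ (ij.1 + ij.2) * ((ρ / r) ^ ij.1 * (ρ / r) ^ ij.2) := by
        rw [div_pow, div_pow, pow_add]
        field_simp
    _ ≤ M * ((ρ / r) ^ ij.1 * (ρ / r) ^ ij.2) := by
        gcongr
        exact hc ij.1 ij.2

lemma summable_geometric_prod (M : ℝ) (hρ : 0 ≤ ρ) (hρr : ρ < r) :
    Summable fun ij : ℕ × ℕ => M * ((ρ / r) ^ ij.1 * (ρ / r) ^ ij.2) := by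
  have hr : 0 < r := hρ.trans_lt hρr
  have h := summable_geometric_of_lt_one (div_nonneg hρ hr.le) ((div_lt_one hr).2 hρr)
  exact (h.mul_of_nonneg h (fun _ => by positivity) (fun _ => by positivity)).mul_left M

lemma hasSum_bivariateSum [CompleteSpace E] (hc : CauchyEstimates c r M) (hw : ‖w‖ < r) :
    HasSum (bivariateTerm c w) (bivariateSum c w) :=
  (Summable.of_norm_bounded (summable_geometric_prod M (norm_nonneg w) hw)
    (norm_bivariateTerm_le ((norm_nonneg w).trans_lt hw) hc le_rfl)).hasSum

lemma bivariateSum_zero (c : ℕ × ℕ → E) :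
    bivariateSum c (0 : 𝕜 × 𝕜) = c (0, 0) := by
  rw [bivariateSum, tsum_eq_single (0, 0)]
  · simp [bivariateTerm]
  · rintro ⟨i, j⟩ hij
    have hij' : i ≠ 0 ∨ j ≠ 0 := by simpa [or_iff_not_imp_left] using hij
    rcases hij' with hi | hj
    · simp [bivariateTerm, hi]
    · simp [bivariateTerm, hj]

variable (𝕜) in
/-- The monomial `x ^ i y ^ (n - i)`, for `i ≤ n`, as a (non-symmetric) `n`-linear form: the first
coordinate is taken in the first `i` arguments and the second coordinate in the others. -/
noncomputable def bivariateMonomial (n i : ℕ) :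
    ContinuousMultilinearMap 𝕜 (fun _ : Fin n => 𝕜 × 𝕜) 𝕜 :=
  (ContinuousMultilinearMap.mkPiAlgebraFin 𝕜 n 𝕜).compContinuousLinearMap fun k =>
    if (k : ℕ) < i then .fst 𝕜 𝕜 𝕜 else .snd 𝕜 𝕜 𝕜

lemma norm_bivariateMonomial_le_one (n i : ℕ) : ‖bivariateMonomial 𝕜 n i‖ ≤ 1 := by
  refine (ContinuousMultilinearMap.norm_compContinuousLinearMap_le _ _).trans ?_
  rw [ContinuousMultilinearMap.norm_mkPiAlgebraFin, one_mul]
  refine Finset.prod_le_one (fun _ _ => norm_nonneg _) fun k _ => ?_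
  split_ifs
  exacts [ContinuousLinearMap.norm_fst_le .., ContinuousLinearMap.norm_snd_le ..]

lemma bivariateMonomial_apply_diag (i j : ℕ) (w : 𝕜 × 𝕜) :
    bivariateMonomial 𝕜 (i + j) i (fun _ => w) = w.1 ^ i * w.2 ^ j := by
  simp [bivariateMonomial, ContinuousMultilinearMap.mkPiAlgebraFin_apply, List.prod_ofFn,
    Fin.prod_univ_add]

variable (𝕜) in
/-- The power series in two variables with coefficients `c`, as a formal multilinear series. -/
noncomputable def bivariateSeries (c : ℕ × ℕ → E) : FormalMultilinearSeries 𝕜 (𝕜 × 𝕜) E :=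
  fun n => ∑ ij ∈ antidiagonal n, (bivariateMonomial 𝕜 n ij.1).smulRight (c ij)

lemma bivariateSeries_apply_diag (c : ℕ × ℕ → E) (n : ℕ) (w : 𝕜 × 𝕜) :
    bivariateSeries 𝕜 c n (fun _ => w) = ∑ ij ∈ antidiagonal n, bivariateTerm c w ij := by
  rw [bivariateSeries, sum_apply]
  refine Finset.sum_congr rfl fun ij hij => ?_
  obtain rfl := mem_antidiagonal.1 hij
  rw [ContinuousMultilinearMap.smulRight_apply, bivariateMonomial_apply_diag, bivariateTerm]

lemma norm_bivariateSeries_mul_pow_le (hr : 0 ≤ r) (hc : CauchyEstimates c r M) (n : ℕ) :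
    ‖bivariateSeries 𝕜 c n‖ * r ^ n ≤ (n + 1) * M := by
  have hterm : ∀ ij ∈ antidiagonal n,
      ‖(bivariateMonomial 𝕜 n ij.1).smulRight (c ij)‖ * r ^ n ≤ M := by
    rintro ⟨i, j⟩ hij
    obtain rfl := mem_antidiagonal.1 hij
    rw [ContinuousMultilinearMap.norm_smulRight]
    refine le_trans ?_ (hc i j)
    gcongr
    exact mul_le_of_le_one_left (norm_nonneg _) (norm_bivariateMonomial_le_one _ _)
  calc ‖bivariateSeries 𝕜 c n‖ * r ^ n
      ≤ ∑ ij ∈ antidiagonal n,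
          ‖(bivariateMonomial 𝕜 n ij.1).smulRight (c ij)‖ * r ^ n := by
        rw [← Finset.sum_mul]
        gcongr
        exact norm_sum_le _ _
    _ ≤ ∑ _ij ∈ antidiagonal n, M := Finset.sum_le_sum hterm
    _ = (n + 1) * M := by simp

lemma le_radius_bivariateSeries (hr : 0 ≤ r) (hc : CauchyEstimates c r M) :
    ENNReal.ofReal (r / 2) ≤ (bivariateSeries 𝕜 c).radius := by
  refine FormalMultilinearSeries.le_radius_of_bound _ M fun n => ?_
  have hn : (n + 1 : ℝ) ≤ 2 ^ n := mod_cast Nat.lt_two_pow_self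
  rw [Real.coe_toNNReal _ (by positivity), div_pow, mul_div_assoc', div_le_iff₀ (by positivity)]
  calc ‖bivariateSeries 𝕜 c n‖ * r ^ n ≤ (n + 1) * M := norm_bivariateSeries_mul_pow_le hr hc n
    _ ≤ 2 ^ n * M := by gcongr; exact hc.nonneg
    _ = M * 2 ^ n := mul_comm _ _

lemma hasSum_bivariateSeries [CompleteSpace E] (hc : CauchyEstimates c r M) (hw : ‖w‖ < r) :
    HasSum (fun n => bivariateSeries 𝕜 c n fun _ => w) (bivariateSum c w) := by
  have hsum := (sigmaAntidiagonalEquivProd.hasSum_iff.2 (hasSum_bivariateSum hc hw)).sigma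
    fun n => hasSum_fintype _
  refine hsum.congr_fun fun n => ?_
  rw [bivariateSeries_apply_diag, ← Finset.sum_coe_sort]
  rfl

lemma analyticAt_bivariateSum [CompleteSpace E] (hr : 0 < r) (hc : CauchyEstimates c r M) :
    AnalyticAt 𝕜 (bivariateSum c : 𝕜 × 𝕜 → E) 0 := by
  refine HasFPowerSeriesOnBall.analyticAt (p := bivariateSeries 𝕜 c)
    (r := ENNReal.ofReal (r / 2))
    ⟨le_radius_bivariateSeries hr.le hc, by simpa using hr, fun {w} hw => ?_⟩
  have hwr : ‖w‖ < r / 2 := by simpa [Metric.eball_ofReal] using hw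
  rw [zero_add]
  exact hasSum_bivariateSeries hc (hwr.trans (half_lt_self hr))

lemma exists_analyticAt_hasSum_pow_smul [CompleteSpace E] {a : ℕ → E} (hr : 0 < r)
    (ha : ∀ n, ‖a n‖ * r ^ n ≤ M) :
    ∃ f : 𝕜 → E, AnalyticAt 𝕜 f 0 ∧ ∀ t, ‖t‖ < r → HasSum (fun n => t ^ n • a n) (f t) := by
  let P : FormalMultilinearSeries 𝕜 𝕜 E :=
    fun n => ContinuousMultilinearMap.mkPiRing 𝕜 (Fin n) (a n)
  have hradius : ENNReal.ofReal r ≤ P.radius := by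
    refine P.le_radius_of_bound M fun n => ?_
    rw [Real.coe_toNNReal _ hr.le, ContinuousMultilinearMap.norm_mkPiRing]
    exact ha n
  have hP := P.hasFPowerSeriesOnBall ((ENNReal.ofReal_pos.2 hr).trans_le hradius)
  refine ⟨P.sum, hP.analyticAt, fun t ht => ?_⟩
  have hmem : t ∈ Metric.eball 0 P.radius :=
    Metric.eball_subset_eball hradius (by simpa [Metric.eball_ofReal] using ht)
  refine (P.hasSum hmem).congr_fun fun n => ?_
  simp [P]

end BivariateSeries

section CauchyCoefficients

open Real

variable {E : Type*} [NormedAddCommGroup E] {R M : ℝ}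

section CircleAverage

variable [NormedSpace ℝ E] {f : ℂ → E} {z₀ : ℂ}

lemma norm_circleAverage_le (hf : ∀ z ∈ sphere z₀ |R|, ‖f z‖ ≤ M) :
    ‖circleAverage f z₀ R‖ ≤ M := by
  have hint : ‖∫ θ in 0..2 * π, f (circleMap z₀ R θ)‖ ≤ M * |2 * π - 0| :=
    intervalIntegral.norm_integral_le_of_norm_le_const fun θ _ =>
      hf _ (circleMap_mem_sphere' z₀ R θ)
  rw [sub_zero, abs_of_pos two_pi_pos, mul_comm M] at hint
  rwa [circleAverage, norm_smul, norm_inv, norm_of_nonneg two_pi_pos.le,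
    inv_mul_le_iff₀ two_pi_pos]

lemma hasSum_circleAverage {ι : Type*} [Countable ι] {F : ι → ℂ → E} {u : ι → ℝ}
    (hF : ∀ i, ContinuousOn (F i) (sphere z₀ |R|)) (hu : Summable u)
    (hFu : ∀ i, ∀ z ∈ sphere z₀ |R|, ‖F i z‖ ≤ u i)
    (hf : ∀ z ∈ sphere z₀ |R|, HasSum (fun i => F i z) (f z)) :
    HasSum (fun i => circleAverage (F i) z₀ R) (circleAverage f z₀ R) := by
  have hmem := circleMap_mem_sphere' z₀ R
  refine HasSum.const_smul _ <|
    intervalIntegral.hasSum_integral_of_dominated_convergence (fun i _ => u i)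
      (fun i => ?_) (fun i => .of_forall fun θ _ => hFu i _ (hmem θ))
      (.of_forall fun _ _ => hu) intervalIntegrable_const (.of_forall fun θ _ => hf _ (hmem θ))
  exact ((hF i).comp_continuous (continuous_circleMap z₀ R) hmem).aestronglyMeasurable

lemma continuousOn_circleAverage_right {X : Type*} [TopologicalSpace X] {s : Set X}
    {g : X × ℂ → E} (hg : ContinuousOn g (s ×ˢ sphere z₀ |R|)) :
    ContinuousOn (fun x => circleAverage (fun z => g (x, z)) z₀ R) s := by
  rw [continuousOn_iff_continuous_domRestrict]
  refine Continuous.const_smul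
    (intervalIntegral.continuous_parametric_intervalIntegral_of_continuous' ?_ _ _) _
  exact hg.comp_continuous (f := fun y : s × ℝ => ((y.1 : X), circleMap z₀ R y.2)) (by fun_prop)
    fun y => ⟨y.1.2, circleMap_mem_sphere' z₀ R y.2⟩

end CircleAverage

variable [NormedSpace ℂ E]

/-- The `n`-th Taylor coefficient at `0` of a function holomorphic on the disc of radius `R`, by
Cauchy's formula: the average of `g z / z ^ n` on the circle of radius `R`. -/
noncomputable def cauchyCoeff (R : ℝ) (g : ℂ → E) (n : ℕ) : E :=
  circleAverage (fun z => (z ^ n)⁻¹ • g z) 0 R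

lemma norm_cauchyCoeff_mul_pow_le (hR : 0 < R) {g : ℂ → E}
    (hg : ∀ z ∈ sphere (0 : ℂ) R, ‖g z‖ ≤ M) (n : ℕ) : ‖cauchyCoeff R g n‖ * R ^ n ≤ M := by
  rw [← le_div_iff₀ (by positivity)]
  refine norm_circleAverage_le fun z hz => ?_
  rw [abs_of_pos hR] at hz
  rw [norm_smul, norm_inv, norm_pow, mem_sphere_zero_iff_norm.1 hz, inv_mul_eq_div]
  gcongr
  exact hg z hz

lemma hasSum_cauchyCoeff [CompleteSpace E] {g : ℂ → E}
    (hg : DifferentiableOn ℂ g (closedBall 0 R)) {w : ℂ} (hw : ‖w‖ < R) :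
    HasSum (fun n => w ^ n • cauchyCoeff R g n) (g w) := by
  have hR : 0 < R := (norm_nonneg w).trans_lt hw
  lift R to NNReal using hR.le
  have hsum := (hg.hasFPowerSeriesOnBall (mod_cast hR)).hasSum (y := w)
    (by rw [Metric.eball_coe]; simpa using hw)
  rw [zero_add] at hsum
  refine hsum.congr_fun fun n => ?_
  rw [FormalMultilinearSeries.apply_eq_pow_smul_coeff, FormalMultilinearSeries.coeff]
  congr 1
  refine Eq.trans ?_ (cauchyPowerSeries_apply g 0 R n 1).symm
  rw [cauchyCoeff, circleAverage_eq_circleIntegral hR.ne']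
  refine congrArg _ (circleIntegral.integral_congr hR.le fun z _ => ?_)
  simp only [one_div, inv_pow, sub_zero]
  exact smul_comm _ _ _

lemma cauchyCoeff_const_smul (R : ℝ) (a : ℂ) (g : ℂ → E) (n : ℕ) :
    cauchyCoeff R (fun z => a • g z) n = a • cauchyCoeff R g n := by
  simp only [cauchyCoeff, smul_comm _ a, circleAverage_fun_smul]

lemma continuousOn_inv_pow_smul {g : ℂ → E} {s : Set ℂ} (hg : ContinuousOn g s)
    (hs : 0 ∉ s) (n : ℕ) : ContinuousOn (fun z => (z ^ n)⁻¹ • g z) s :=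
  ((continuousOn_id.pow n).inv₀ fun _ hz => pow_ne_zero n (ne_of_mem_of_not_mem hz hs)).smul hg

lemma hasSum_cauchyCoeff_of_hasSum (hR : 0 < R) {ι : Type*} [Countable ι] {G : ι → ℂ → E}
    {g : ℂ → E} {u : ι → ℝ} (hG : ∀ i, ContinuousOn (G i) (sphere 0 R)) (hu : Summable u)
    (hGu : ∀ i, ∀ z ∈ sphere (0 : ℂ) R, ‖G i z‖ ≤ u i)
    (hg : ∀ z ∈ sphere (0 : ℂ) R, HasSum (fun i => G i z) (g z)) (n : ℕ) :
    HasSum (fun i => cauchyCoeff R (G i) n) (cauchyCoeff R g n) := by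
  have hsphere : sphere (0 : ℂ) |R| = sphere 0 R := by rw [abs_of_pos hR]
  refine hasSum_circleAverage (u := fun i => (R ^ n)⁻¹ * u i) (fun i => ?_) (hu.mul_left _)
    (fun i z hz => ?_) (fun z hz => (hg z (hsphere ▸ hz)).const_smul _) <;> rw [hsphere] at *
  · exact continuousOn_inv_pow_smul (hG i) (by simp [hR.ne]) n
  · rw [norm_smul, norm_inv, norm_pow, mem_sphere_zero_iff_norm.1 hz]
    gcongr
    exact hGu i z hz

/-- The Taylor coefficients at `0` of a function of two variables, by iterating Cauchy's formula on
the bidisc of radius `R`. -/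
noncomputable def bivariateCauchyCoeff (R : ℝ) (h : ℂ × ℂ → E) (ij : ℕ × ℕ) : E :=
  cauchyCoeff R (fun x => cauchyCoeff R (fun y => h (x, y)) ij.2) ij.1

variable {h : ℂ × ℂ → E}

lemma sphere_prod_sphere_subset_closedBall :
    sphere (0 : ℂ) R ×ˢ sphere (0 : ℂ) R ⊆ closedBall 0 R := by
  rw [← Prod.mk_zero_zero, ← closedBall_prod_same]
  exact Set.prod_mono sphere_subset_closedBall sphere_subset_closedBall

lemma norm_cauchyCoeff_right_mul_pow_le (hR : 0 < R) (hM : ∀ w ∈ closedBall 0 R, ‖h w‖ ≤ M)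
    (j : ℕ) {x : ℂ} (hx : x ∈ sphere 0 R) :
    ‖cauchyCoeff R (fun y => h (x, y)) j‖ * R ^ j ≤ M :=
  norm_cauchyCoeff_mul_pow_le hR
    (fun _ hy => hM _ (sphere_prod_sphere_subset_closedBall ⟨hx, hy⟩)) j

lemma cauchyEstimates_bivariateCauchyCoeff (hR : 0 < R)
    (hM : ∀ w ∈ closedBall 0 R, ‖h w‖ ≤ M) : CauchyEstimates (bivariateCauchyCoeff R h) R M := by
  intro i j
  rw [add_comm, pow_add, ← mul_assoc, mul_right_comm, ← le_div_iff₀ (by positivity)]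
  refine norm_cauchyCoeff_mul_pow_le hR (fun x hx => ?_) i
  rw [le_div_iff₀ (by positivity)]
  exact norm_cauchyCoeff_right_mul_pow_le hR hM j hx

lemma continuousOn_cauchyCoeff_right (hR : 0 < R) (hh : ContinuousOn h (closedBall 0 R)) (j : ℕ) :
    ContinuousOn (fun x => cauchyCoeff R (fun y => h (x, y)) j) (sphere 0 R) := by
  refine continuousOn_circleAverage_right (g := fun w : ℂ × ℂ => (w.2 ^ j)⁻¹ • h w) ?_
  rw [abs_of_pos hR]
  refine ContinuousOn.smul ?_ (hh.mono sphere_prod_sphere_subset_closedBall)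
  refine (continuousOn_snd.pow j).inv₀ fun w hw => pow_ne_zero j ?_
  exact ne_zero_of_mem_sphere hR.ne' ⟨w.2, hw.2⟩

variable [CompleteSpace E]

lemma hasSum_bivariateCauchyCoeff_right (hh : DifferentiableOn ℂ h (closedBall 0 R))
    (hM : ∀ w ∈ closedBall 0 R, ‖h w‖ ≤ M) {y : ℂ} (hy : ‖y‖ < R) (i : ℕ) :
    HasSum (fun j => y ^ j • bivariateCauchyCoeff R h (i, j))
      (cauchyCoeff R (fun x => h (x, y)) i) := by
  have hR : 0 < R := (norm_nonneg _).trans_lt hy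
  have hslice : ∀ x ∈ sphere (0 : ℂ) R, DifferentiableOn ℂ (fun z => h (x, z)) (closedBall 0 R) :=
    fun x hx => hh.comp (by fun_prop) fun z hz => by
      simpa [Prod.norm_def, mem_sphere_zero_iff_norm.1 hx] using hz
  refine (hasSum_cauchyCoeff_of_hasSum hR
    (G := fun j x => y ^ j • cauchyCoeff R (fun z => h (x, z)) j) (u := fun j => M * (‖y‖ / R) ^ j)
    (fun j => continuousOn_const.smul (continuousOn_cauchyCoeff_right hR hh.continuousOn j))
    ((summable_geometric_of_lt_one (by positivity) ((div_lt_one hR).2 hy)).mul_left M)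
    (fun j x hx => ?_) (fun x hx => hasSum_cauchyCoeff (hslice x hx) hy) i).congr_fun
      fun j => (cauchyCoeff_const_smul ..).symm
  rw [norm_smul, norm_pow, div_pow, mul_div_assoc', mul_comm, le_div_iff₀ (by positivity),
    mul_right_comm]
  gcongr
  exact norm_cauchyCoeff_right_mul_pow_le hR hM j hx

lemma hasSum_bivariateCauchyCoeff (hh : DifferentiableOn ℂ h (closedBall 0 R))
    (hM : ∀ w ∈ closedBall 0 R, ‖h w‖ ≤ M) {w : ℂ × ℂ} (hw : ‖w‖ < R) :
    HasSum (bivariateTerm (bivariateCauchyCoeff R h) w) (h w) := by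
  have hR : 0 < R := (norm_nonneg _).trans_lt hw
  have hx : ‖w.1‖ < R := (norm_fst_le w).trans_lt hw
  have hy : ‖w.2‖ < R := (norm_snd_le w).trans_lt hw
  have hslice : DifferentiableOn ℂ (fun z => h (z, w.2)) (closedBall 0 R) :=
    hh.comp (by fun_prop) fun z hz => by simpa [Prod.norm_def, hy.le] using hz
  have hrow (i : ℕ) : HasSum (fun j => bivariateTerm (bivariateCauchyCoeff R h) w (i, j))
      (w.1 ^ i • cauchyCoeff R (fun z => h (z, w.2)) i) := by
    simpa only [bivariateTerm, mul_smul] using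
      (hasSum_bivariateCauchyCoeff_right hh hM hy i).const_smul (w.1 ^ i)
  have hsum := hasSum_bivariateSum (cauchyEstimates_bivariateCauchyCoeff hR hM) hw
  rwa [(hsum.prod_fiberwise hrow).unique (hasSum_cauchyCoeff hslice hx)] at hsum

lemma exists_hasSum_bivariateTerm (hh : ∀ᶠ w in 𝓝 (0 : ℂ × ℂ), DifferentiableAt ℂ h w) :
    ∃ (r M : ℝ) (c : ℕ × ℕ → E), 0 < r ∧ CauchyEstimates c r M ∧
      ∀ w : ℂ × ℂ, ‖w‖ < r → HasSum (bivariateTerm c w) (h w) := by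
  obtain ⟨R, hR, hRh⟩ := nhds_basis_closedBall.mem_iff.1 hh
  have hdiff : DifferentiableOn ℂ h (closedBall 0 R) :=
    fun w hw => (hRh hw).differentiableWithinAt
  obtain ⟨M, hM⟩ :=
    (isCompact_closedBall (0 : ℂ × ℂ) R).exists_bound_of_continuousOn hdiff.continuousOn
  exact ⟨R, M, bivariateCauchyCoeff R h, hR, cauchyEstimates_bivariateCauchyCoeff hR hM,
    fun w hw => hasSum_bivariateCauchyCoeff hdiff hM hw⟩

theorem analyticAt_of_eventually_differentiableAt
    (hh : ∀ᶠ w in 𝓝 (0 : ℂ × ℂ), DifferentiableAt ℂ h w) : AnalyticAt ℂ h 0 := by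
  obtain ⟨r, M, c, hr, hc, hsum⟩ := exists_hasSum_bivariateTerm hh
  refine (analyticAt_bivariateSum hr hc).congr ?_
  filter_upwards [ball_mem_nhds 0 hr] with w hw
  exact (hsum w (mem_ball_zero_iff.1 hw)).tsum_eq

end CauchyCoefficients

section Hadamard

variable {𝕜 E F : Type*} [NontriviallyNormedField 𝕜] [NormedAddCommGroup E] [NormedSpace 𝕜 E]
  [NormedAddCommGroup F] [NormedSpace 𝕜 F] {h : E → F}

lemma shift_apply_diag (P : FormalMultilinearSeries 𝕜 E F) (n : ℕ)
    (w : E) : (P.shift n fun _ => w) w = P (n + 1) fun _ => w := by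
  rw [FormalMultilinearSeries.shift, ContinuousMultilinearMap.curryRight_apply]
  exact congrArg _ (Fin.snoc_init_self fun _ => w)

lemma hasFDerivAt_clm_apply_self {A : E → E →L[𝕜] F} (hA : DifferentiableAt 𝕜 A 0) :
    HasFDerivAt (fun w => A w w) (A 0) 0 := by
  refine (hA.hasFDerivAt.clm_apply (hasFDerivAt_id 0)).congr_fderiv ?_
  ext v
  simp

lemma analyticAt_clm_apply {A : E → E →L[𝕜] F} (hA : AnalyticAt 𝕜 A 0) (v : E) :
    AnalyticAt 𝕜 (fun w => A w v) 0 :=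
  ((ContinuousLinearMap.apply 𝕜 F v).analyticAt (A 0)).comp hA

lemma tendsto_inv_sq_smul_of_isBigO (hh : h =O[𝓝 0] fun w => ‖w‖ ^ 3) (v : E) :
    Tendsto (fun t : 𝕜 => (t ^ 2)⁻¹ • h (t • v)) (𝓝[≠] 0) (𝓝 0) := by
  have hv : Tendsto (fun t : 𝕜 => t • v) (𝓝[≠] 0) (𝓝 0) :=
    ((continuous_id.smul continuous_const).tendsto' 0 0 (zero_smul _ v)).mono_left
      nhdsWithin_le_nhds
  have hO : (fun t : 𝕜 => (t ^ 2)⁻¹ • h (t • v)) =O[𝓝[≠] 0]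
      fun t : 𝕜 => ‖(t ^ 2)⁻¹‖ * ‖t • v‖ ^ 3 :=
    (isBigO_refl (fun t : 𝕜 => (t ^ 2)⁻¹) _).norm_right.smul (hh.comp_tendsto hv)
  refine hO.trans_tendsto ?_
  have hlim : Tendsto (fun t : 𝕜 => ‖t‖ * ‖v‖ ^ 3) (𝓝[≠] 0) (𝓝 0) :=
    ((continuous_norm.mul continuous_const).tendsto' 0 0 (by simp)).mono_left nhdsWithin_le_nhds
  refine hlim.congr' ?_
  filter_upwards [self_mem_nhdsWithin] with t ht
  have ht' : ‖t‖ ≠ 0 := norm_ne_zero_iff.2 ht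
  rw [norm_inv, norm_pow, norm_smul]
  field_simp

variable [CompleteSpace F]

lemma hasFPowerSeriesOnBall_sum_shift {P : FormalMultilinearSeries 𝕜 E F} {ρ : ENNReal}
    (hP : HasFPowerSeriesOnBall h P 0 ρ) : HasFPowerSeriesOnBall P.shift.sum P.shift 0 ρ := by
  refine (P.shift.hasFPowerSeriesOnBall ?_).mono hP.r_pos ?_ <;> rw [P.radius_shift]
  exacts [hP.radius_pos, hP.r_le]

lemma eq_add_sum_shift_apply_self {P : FormalMultilinearSeries 𝕜 E F} {ρ : ENNReal}
    (hP : HasFPowerSeriesOnBall h P 0 ρ) {w : E} (hw : w ∈ Metric.eball 0 ρ) :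
    h w = h 0 + P.shift.sum w w := by
  have hsum : HasSum (fun n => P n fun _ => w) (h w) := by
    simpa only [zero_add] using hP.hasSum hw
  have hshift : HasSum (fun n => P.shift n fun _ => w) (P.shift.sum w) := by
    simpa only [zero_add] using (hasFPowerSeriesOnBall_sum_shift hP).hasSum hw
  have htail : HasSum (fun n => P (n + 1) fun _ => w) (P.shift.sum w w) :=
    ((ContinuousLinearMap.apply 𝕜 F w).hasSum hshift).congr_fun fun n =>
      (shift_apply_diag P n w).symm
  refine (hsum.unique ((hasSum_nat_add_iff 1).1 htail)).trans ?_
  rw [Finset.sum_range_one, hP.coeff_zero, add_comm]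

theorem exists_analyticAt_eq_add_apply_self (hh : AnalyticAt 𝕜 h 0) :
    ∃ A : E → E →L[𝕜] F, AnalyticAt 𝕜 A 0 ∧ ∀ᶠ w in 𝓝 0, h w = h 0 + A w w := by
  obtain ⟨P, ρ, hP⟩ := hh
  refine ⟨P.shift.sum, (hasFPowerSeriesOnBall_sum_shift hP).analyticAt, ?_⟩
  filter_upwards [Metric.eball_mem_nhds 0 hP.r_pos] with w hw
  exact eq_add_sum_shift_apply_self hP hw

theorem exists_analyticAt_eq_apply_self_self (hh : AnalyticAt 𝕜 h 0)
    (hO : h =O[𝓝 0] fun w => ‖w‖ ^ 3) :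
    ∃ B : E → E →L[𝕜] E →L[𝕜] F, AnalyticAt 𝕜 B 0 ∧ (∀ v, B 0 v v = 0) ∧
      ∀ᶠ w in 𝓝 0, h w = B w w w := by
  obtain ⟨A, hA, hhA⟩ := exists_analyticAt_eq_add_apply_self hh
  obtain ⟨B, hB, hAB⟩ := exists_analyticAt_eq_add_apply_self hA
  have hh0 : h 0 = 0 := IsBigO.eq_zero_of_norm_pow (x₀ := 0) (by simpa using hO) three_ne_zero
  have hA0 : A 0 = 0 := by
    have hderiv : HasFDerivAt h (A 0) 0 :=
      ((hasFDerivAt_clm_apply_self hA.differentiableAt).const_add (h 0)).congr_of_eventuallyEq hhA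
    refine hderiv.unique (IsBigO.hasFDerivAt (x₀ := 0) (n := 3) ?_ (by norm_num))
    simpa using hO
  have hhB : ∀ᶠ w in 𝓝 0, h w = B w w w := by
    filter_upwards [hhA, hAB] with w hw hw'
    rw [hw, hw', hh0, hA0, zero_add, zero_add]
  refine ⟨B, hB, fun v => ?_, hhB⟩
  have hline : Tendsto (fun t : 𝕜 => t • v) (𝓝 0) (𝓝 0) :=
    (continuous_id.smul continuous_const).tendsto' 0 0 (zero_smul _ v)
  have hBv : Tendsto (fun t : 𝕜 => B (t • v) v v) (𝓝[≠] 0) (𝓝 (B 0 v v)) :=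
    (analyticAt_clm_apply (analyticAt_clm_apply hB v) v).continuousAt.tendsto.comp
      (hline.mono_left nhdsWithin_le_nhds)
  refine tendsto_nhds_unique (hBv.congr' ?_) (tendsto_inv_sq_smul_of_isBigO hO v)
  filter_upwards [self_mem_nhdsWithin, nhdsWithin_le_nhds (hline.eventually hhB)] with t ht hht
  have ht' : t ≠ 0 := ht
  rw [hht, map_smul, map_smul, smul_apply, smul_smul, smul_smul, mul_assoc, ← sq,
    inv_mul_cancel₀ (pow_ne_zero 2 ht'), one_smul]

end Hadamard

section SaddlePoint

variable {𝕜 : Type*} [NontriviallyNormedField 𝕜] [CompleteSpace 𝕜]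

lemma exists_analyticAt_eq_quadratic {p : 𝕜 × 𝕜 → 𝕜} (hp : AnalyticAt 𝕜 p 0)
    (hO : (fun w => p w - w.1 * w.2) =O[𝓝 0] fun w => ‖w‖ ^ 3) :
    ∃ α β γ : 𝕜 × 𝕜 → 𝕜, AnalyticAt 𝕜 α 0 ∧ AnalyticAt 𝕜 β 0 ∧ AnalyticAt 𝕜 γ 0 ∧
      α 0 = 0 ∧ β 0 = 1 ∧ γ 0 = 0 ∧
      ∀ᶠ w in 𝓝 0, p w = α w * w.1 ^ 2 + β w * w.1 * w.2 + γ w * w.2 ^ 2 := by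
  obtain ⟨B, hB, hB0, hpB⟩ := exists_analyticAt_eq_apply_self_self
    (hp.fun_sub (analyticAt_fst.fun_mul analyticAt_snd)) hO
  have happly (u v : 𝕜 × 𝕜) : AnalyticAt 𝕜 (fun w => B w u v) 0 :=
    analyticAt_clm_apply (analyticAt_clm_apply hB u) v
  have hexpand (w v : 𝕜 × 𝕜) : B w v v = B w (1, 0) (1, 0) * v.1 ^ 2 +
      (B w (1, 0) (0, 1) + B w (0, 1) (1, 0)) * v.1 * v.2 + B w (0, 1) (0, 1) * v.2 ^ 2 := by
    have hv : v = v.1 • ((1, 0) : 𝕜 × 𝕜) + v.2 • ((0, 1) : 𝕜 × 𝕜) := by simp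
    conv_lhs => rw [hv]
    simp only [map_add, map_smul, add_apply, smul_apply, smul_eq_mul]
    ring
  have hcross : B 0 (1, 0) (0, 1) + B 0 (0, 1) (1, 0) = 0 := by
    simpa [hB0] using (hexpand 0 (1, 1)).symm
  refine ⟨fun w => B w (1, 0) (1, 0), fun w => 1 + (B w (1, 0) (0, 1) + B w (0, 1) (1, 0)),
    fun w => B w (0, 1) (0, 1), happly _ _,
    analyticAt_const.add ((happly _ _).add (happly _ _)), happly _ _,
    hB0 _, by simp only [hcross, add_zero], hB0 _, ?_⟩
  filter_upwards [hpB] with w hw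
  linear_combination hw + hexpand w w

end SaddlePoint

section TangentToId

variable {𝕜 E E' : Type*} [NontriviallyNormedField 𝕜] [NormedAddCommGroup E] [NormedSpace 𝕜 E]
  [NormedAddCommGroup E'] [NormedSpace 𝕜 E'] {F G : E → E}

variable (𝕜) in
/-- An analytic map near `0` which fixes `0` and whose derivative at `0` is the identity. -/
structure IsTangentToId (F : E → E) : Prop where
  analyticAt : AnalyticAt 𝕜 F 0
  map_zero : F 0 = 0
  hasFDerivAt : HasFDerivAt F (.id 𝕜 E) 0

namespace IsTangentToId

lemma tendsto (hF : IsTangentToId 𝕜 F) : Tendsto F (𝓝 0) (𝓝 0) := by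
  simpa only [hF.map_zero] using hF.analyticAt.continuousAt.tendsto

lemma comp (hF : IsTangentToId 𝕜 F) (hG : IsTangentToId 𝕜 G) : IsTangentToId 𝕜 (F ∘ G) where
  analyticAt := hF.analyticAt.comp_of_eq hG.analyticAt hG.map_zero
  map_zero := by rw [Function.comp_apply, hG.map_zero, hF.map_zero]
  hasFDerivAt := by
    have hF' : HasFDerivAt F (.id 𝕜 E) (G 0) := hG.map_zero.symm ▸ hF.hasFDerivAt
    exact hF'.comp 0 hG.hasFDerivAt

lemma conj (hF : IsTangentToId 𝕜 F) (e : E' ≃L[𝕜] E) :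
    IsTangentToId 𝕜 (e.symm ∘ F ∘ e) where
  analyticAt := (e.symm.analyticAt _).comp (hF.analyticAt.comp_of_eq (e.analyticAt 0) e.map_zero)
  map_zero := by simp [hF.map_zero]
  hasFDerivAt := by
    have hF' : HasFDerivAt F (.id 𝕜 E) (e 0) := e.map_zero.symm ▸ hF.hasFDerivAt
    refine (e.symm.hasFDerivAt.comp 0 (hF'.comp 0 e.hasFDerivAt)).congr_fderiv ?_
    ext v
    simp

lemma exists_rightInverse [CompleteSpace 𝕜] [CompleteSpace E] (hF : IsTangentToId 𝕜 F) :
    ∃ G : E → E, IsTangentToId 𝕜 G ∧ ∀ᶠ w in 𝓝 0, F (G w) = w := by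
  have hstrict : HasStrictFDerivAt F (ContinuousLinearEquiv.refl 𝕜 E : E →L[𝕜] E) 0 := by
    have hF' := hF.analyticAt.hasStrictFDerivAt
    rwa [hF.hasFDerivAt.fderiv] at hF'
  have hG0 : hstrict.localInverse F _ 0 0 = 0 := by
    simpa only [hF.map_zero] using hstrict.localInverse_apply_image
  have hG : AnalyticAt 𝕜 (hstrict.localInverse F _ 0) (F 0) :=
    (hstrict.toOpenPartialHomeomorph F).analyticAt_symm'
      hstrict.mem_toOpenPartialHomeomorph_source hF.analyticAt hstrict.hasFDerivAt.fderiv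
  have hG' := hstrict.to_localInverse.hasFDerivAt
  have hFG := hstrict.eventually_right_inverse
  rw [hF.map_zero] at hG hG' hFG
  exact ⟨_, ⟨hG, hG0, hG'⟩, hFG⟩

end IsTangentToId

lemma hasFDerivAt_mul_clm {g : E → 𝕜} (hg : DifferentiableAt 𝕜 g 0) (l : E →L[𝕜] 𝕜) :
    HasFDerivAt (fun w => g w * l w) (g 0 • l) 0 := by
  refine (hg.hasFDerivAt.mul l.hasFDerivAt).congr_fderiv ?_
  ext v
  simp

lemma isTangentToId_of_matrix_eq_one {a b c d : 𝕜 × 𝕜 → 𝕜} (ha : AnalyticAt 𝕜 a 0)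
    (hb : AnalyticAt 𝕜 b 0) (hc : AnalyticAt 𝕜 c 0) (hd : AnalyticAt 𝕜 d 0)
    (ha0 : a 0 = 1) (hb0 : b 0 = 0) (hc0 : c 0 = 0) (hd0 : d 0 = 1) :
    IsTangentToId 𝕜 fun w : 𝕜 × 𝕜 => (a w * w.1 + b w * w.2, c w * w.1 + d w * w.2) where
  analyticAt := ((ha.mul analyticAt_fst).add (hb.mul analyticAt_snd)).prod
    ((hc.mul analyticAt_fst).add (hd.mul analyticAt_snd))
  map_zero := by simp
  hasFDerivAt := by
    have hfst {g : 𝕜 × 𝕜 → 𝕜} (hg : AnalyticAt 𝕜 g 0) :=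
      hasFDerivAt_mul_clm hg.differentiableAt (.fst 𝕜 𝕜 𝕜)
    have hsnd {g : 𝕜 × 𝕜 → 𝕜} (hg : AnalyticAt 𝕜 g 0) :=
      hasFDerivAt_mul_clm hg.differentiableAt (.snd 𝕜 𝕜 𝕜)
    refine (((hfst ha).add (hsnd hb)).prodMk ((hfst hc).add (hsnd hd))).congr_fderiv ?_
    ext <;> simp [ha0, hb0, hc0, hd0]

end TangentToId

section Determinant

variable {𝕜 E : Type*} [NontriviallyNormedField 𝕜] [NormedAddCommGroup E] [NormedSpace 𝕜 E]
  {F G : E → E} {w : E}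

lemma det_comp (A B : E →L[𝕜] E) : (A ∘L B).det = A.det * B.det :=
  LinearMap.det_comp _ _

lemma det_id : (ContinuousLinearMap.id 𝕜 E).det = 1 :=
  LinearMap.det_id

lemma det_fderiv_comp (hF : DifferentiableAt 𝕜 F (G w)) (hG : DifferentiableAt 𝕜 G w) :
    (fderiv 𝕜 (F ∘ G) w).det = (fderiv 𝕜 F (G w)).det * (fderiv 𝕜 G w).det := by
  rw [fderiv_comp w hF hG, det_comp]

lemma det_fderiv_mul_det_fderiv_eq_one (hF : DifferentiableAt 𝕜 F (G w))
    (hG : DifferentiableAt 𝕜 G w) (hFG : F ∘ G =ᶠ[𝓝 w] id) :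
    (fderiv 𝕜 F (G w)).det * (fderiv 𝕜 G w).det = 1 := by
  rw [← det_fderiv_comp hF hG, hFG.fderiv_eq, fderiv_id, det_id]

lemma det_fderiv_conj {E' : Type*} [NormedAddCommGroup E'] [NormedSpace 𝕜 E'] (e : E' ≃L[𝕜] E)
    {w : E'} (hF : DifferentiableAt 𝕜 F (e w)) :
    (fderiv 𝕜 (e.symm ∘ F ∘ e) w).det = (fderiv 𝕜 F (e w)).det := by
  rw [e.symm.comp_fderiv, fderiv_comp w hF e.differentiableAt, e.fderiv]
  exact LinearMap.det_conj (fderiv 𝕜 F (e w) : E →ₗ[𝕜] E) e.symm.toLinearEquiv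

lemma det_prod_eq (A : 𝕜 × 𝕜 →L[𝕜] 𝕜 × 𝕜) :
    A.det = (A (1, 0)).1 * (A (0, 1)).2 - (A (0, 1)).1 * (A (1, 0)).2 := by
  rw [ContinuousLinearMap.det, ← LinearMap.det_toMatrix (Module.Basis.finTwoProd 𝕜),
    Matrix.det_fin_two]
  simp [LinearMap.toMatrix_apply]

lemma analyticAt_det_fderiv [CompleteSpace 𝕜] {F : 𝕜 × 𝕜 → 𝕜 × 𝕜} (hF : AnalyticAt 𝕜 F 0) :
    AnalyticAt 𝕜 (fun w => (fderiv 𝕜 F w).det) 0 := by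
  have hentry (v : 𝕜 × 𝕜) : AnalyticAt 𝕜 (fun w => fderiv 𝕜 F w v) 0 :=
    analyticAt_clm_apply hF.fderiv v
  simp only [det_prod_eq]
  exact ((analyticAt_fst.comp (hentry _)).mul (analyticAt_snd.comp (hentry _))).sub
    ((analyticAt_fst.comp (hentry _)).mul (analyticAt_snd.comp (hentry _)))

end Determinant

section MorseLemma

lemma exists_analyticAt_root {E : Type*} [NormedAddCommGroup E] [NormedSpace ℂ E] {α β γ : E → ℂ}
    (hα : AnalyticAt ℂ α 0) (hβ : AnalyticAt ℂ β 0) (hγ : AnalyticAt ℂ γ 0)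
    (hα0 : α 0 = 0) (hβ0 : β 0 = 1) :
    ∃ δ : E → ℂ, AnalyticAt ℂ δ 0 ∧ δ 0 = 1 ∧
      ∀ w, δ w ^ 2 - β w * δ w + α w * γ w = 0 := by
  have hΔ : AnalyticAt ℂ (fun w => β w ^ 2 - 4 * α w * γ w) 0 := by fun_prop
  have hΔ0 : β 0 ^ 2 - 4 * α 0 * γ 0 = 1 := by rw [hα0, hβ0]; ring
  refine ⟨fun w => (β w + (β w ^ 2 - 4 * α w * γ w) ^ (2⁻¹ : ℂ)) / 2,
    (hβ.add (hΔ.cpow analyticAt_const (by simp [hΔ0]))).fun_div analyticAt_const two_ne_zero, ?_,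
    fun w => ?_⟩
  · change (β 0 + (β 0 ^ 2 - 4 * α 0 * γ 0) ^ (2⁻¹ : ℂ)) / 2 = 1
    rw [hΔ0, hβ0, one_cpow, one_add_one_eq_two, div_self two_ne_zero]
  · have hsq : ((β w ^ 2 - 4 * α w * γ w) ^ (2⁻¹ : ℂ)) ^ 2 = β w ^ 2 - 4 * α w * γ w :=
      mod_cast cpow_nat_inv_pow (β w ^ 2 - 4 * α w * γ w) two_ne_zero
    linear_combination hsq / 4

lemma exists_isTangentToId_comp_eq_mul {p : ℂ × ℂ → ℂ} (hp : AnalyticAt ℂ p 0)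
    (hO : (fun w => p w - w.1 * w.2) =O[𝓝 0] fun w => ‖w‖ ^ 3) :
    ∃ G : ℂ × ℂ → ℂ × ℂ, IsTangentToId ℂ G ∧ ∀ᶠ w in 𝓝 0, p (G w) = w.1 * w.2 := by
  obtain ⟨α, β, γ, hα, hβ, hγ, hα0, hβ0, hγ0, hpq⟩ := exists_analyticAt_eq_quadratic hp hO
  obtain ⟨δ, hδ, hδ0, hroot⟩ := exists_analyticAt_root hα hβ hγ hα0 hβ0
  have hΦ := isTangentToId_of_matrix_eq_one analyticAt_const (hγ.fun_div hδ (by simp [hδ0])) hα hδ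
    rfl (by rw [hγ0, zero_div]) hα0 hδ0
  obtain ⟨G, hG, hΦG⟩ := hΦ.exists_rightInverse
  refine ⟨G, hG, ?_⟩
  filter_upwards [hΦG, hG.tendsto.eventually hpq,
    hG.tendsto.eventually (hδ.continuousAt.eventually_ne (y := 0) (by simp [hδ0]))]
    with w hw hpw hδw
  rw [hpw, ← congrArg Prod.fst hw, ← congrArg Prod.snd hw]
  field_simp
  linear_combination (-(G w).1 * (G w).2) * hroot (G w)

end MorseLemma

section HomologicalEquation

/-- The derivative of `u` at `w` along the Hamiltonian vector field `x ∂/∂x - y ∂/∂y` of the saddle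
`x * y`. -/
noncomputable def saddleDeriv {E : Type*} [NormedAddCommGroup E] [NormedSpace ℂ E] (u : ℂ × ℂ → E)
    (w : ℂ × ℂ) : E :=
  fderiv ℂ u w (w.1, -w.2)

/-- The flow, with complex time `t`, of the Hamiltonian vector field `x ∂/∂x - y ∂/∂y`. -/
noncomputable def saddleFlow (w : ℂ × ℂ) (t : ℂ) : ℂ × ℂ :=
  (w.1 * exp t, w.2 * exp (-t))

lemma saddleFlow_zero (w : ℂ × ℂ) : saddleFlow w 0 = w := by simp [saddleFlow]

lemma hasDerivAt_saddleFlow (w : ℂ × ℂ) : HasDerivAt (saddleFlow w) (w.1, -w.2) 0 := by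
  have hfst : HasDerivAt (fun t => w.1 * exp t) w.1 0 := by
    simpa using (hasDerivAt_exp 0).const_mul w.1
  have hsnd : HasDerivAt (fun t => w.2 * exp (-t)) (-w.2) 0 := by
    simpa using (hasDerivAt_neg (0 : ℂ)).cexp.const_mul w.2
  exact hfst.prodMk hsnd

lemma continuous_saddleFlow (w : ℂ × ℂ) : Continuous (saddleFlow w) := by
  unfold saddleFlow
  fun_prop

variable {E : Type*} [NormedAddCommGroup E] [NormedSpace ℂ E] {c : ℕ × ℕ → E} {r M : ℝ}
  {w : ℂ × ℂ}

lemma hasDerivAt_comp_saddleFlow {u : ℂ × ℂ → E} (hu : DifferentiableAt ℂ u w) :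
    HasDerivAt (fun t => u (saddleFlow w t)) (saddleDeriv u w) 0 := by
  have hu' : HasFDerivAt u (fderiv ℂ u w) (saddleFlow w 0) := by
    rw [saddleFlow_zero]
    exact hu.hasFDerivAt
  exact hu'.comp_hasDerivAt 0 (hasDerivAt_saddleFlow w)

lemma bivariateTerm_saddleFlow (c : ℕ × ℕ → E) (w : ℂ × ℂ) (t : ℂ) (ij : ℕ × ℕ) :
    bivariateTerm c (saddleFlow w t) ij = exp (((ij.1 : ℂ) - ij.2) * t) • bivariateTerm c w ij := by
  have hexp : exp (((ij.1 : ℂ) - ij.2) * t) = exp t ^ ij.1 * exp (-t) ^ ij.2 := by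
    rw [← exp_nat_mul, ← exp_nat_mul, ← exp_add]
    ring_nf
  simp only [bivariateTerm, saddleFlow, smul_smul, hexp, mul_pow]
  ring_nf

lemma hasDerivAt_bivariateTerm_saddleFlow (c : ℕ × ℕ → E) (w : ℂ × ℂ) (ij : ℕ × ℕ) :
    HasDerivAt (fun t => bivariateTerm c (saddleFlow w t) ij)
      (((ij.1 : ℂ) - ij.2) • bivariateTerm c w ij) 0 := by
  simp only [bivariateTerm_saddleFlow]
  have hexp : HasDerivAt (fun t => exp (((ij.1 : ℂ) - ij.2) * t)) ((ij.1 : ℂ) - ij.2) 0 := by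
    simpa using ((hasDerivAt_id (0 : ℂ)).const_mul ((ij.1 : ℂ) - ij.2)).cexp
  exact hexp.smul_const _

lemma norm_inv_intCast_le_one (k : ℤ) : ‖(k : ℂ)⁻¹‖ ≤ 1 := by
  rw [norm_inv, norm_intCast]
  rcases eq_or_ne k 0 with rfl | hk
  · simp
  · exact inv_le_one_of_one_le₀ (mod_cast Int.one_le_abs hk)

lemma CauchyEstimates.inv_sub_smul (hr : 0 ≤ r) (hc : CauchyEstimates c r M) :
    CauchyEstimates (fun ij : ℕ × ℕ => ((ij.1 : ℂ) - ij.2)⁻¹ • c ij) r M := by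
  intro i j
  have hinv : ‖((i : ℂ) - j)⁻¹‖ ≤ 1 := mod_cast norm_inv_intCast_le_one (i - j)
  refine le_trans ?_ (hc i j)
  rw [norm_smul]
  gcongr
  exact mul_le_of_le_one_left (norm_nonneg _) hinv

variable [CompleteSpace E]

lemma hasSum_saddleDeriv_bivariateSum (hc : CauchyEstimates c r M) (hw : ‖w‖ < r)
    (hd : DifferentiableAt ℂ (bivariateSum c) w) :
    HasSum (fun ij : ℕ × ℕ => ((ij.1 : ℂ) - ij.2) • bivariateTerm c w ij)
      (saddleDeriv (bivariateSum c) w) := by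
  obtain ⟨ρ, hwρ, hρr⟩ := exists_between hw
  have hρ : 0 ≤ ρ := (norm_nonneg w).trans hwρ.le
  have hopen : IsOpen {t | ‖saddleFlow w t‖ < ρ} :=
    isOpen_lt (continuous_saddleFlow w).norm continuous_const
  have hmem : (0 : ℂ) ∈ {t | ‖saddleFlow w t‖ < ρ} := by
    rwa [Set.mem_ofPred_eq, saddleFlow_zero]
  have hdiff (ij : ℕ × ℕ) : Differentiable ℂ fun t => bivariateTerm c (saddleFlow w t) ij := by
    simp only [bivariateTerm_saddleFlow]
    fun_prop
  have hsum := hasSum_deriv_of_summable_norm (summable_geometric_prod M hρ hρr)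
    (fun ij => (hdiff ij).differentiableOn) hopen
    (fun ij t ht => norm_bivariateTerm_le (hρ.trans_lt hρr) hc (le_of_lt ht) ij) hmem
  rw [← (hasDerivAt_comp_saddleFlow hd).deriv]
  exact hsum.congr_fun fun ij => (hasDerivAt_bivariateTerm_saddleFlow c w ij).deriv.symm

lemma exists_analyticAt_hasSum_diagonal (hr : 0 < r) (hc : CauchyEstimates c r M) :
    ∃ f : ℂ → E, AnalyticAt ℂ f 0 ∧ ∀ w : ℂ × ℂ, ‖w‖ < r →
      HasSum (fun ij : ℕ × ℕ => if ij.1 = ij.2 then bivariateTerm c w ij else 0)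
        (f (w.1 * w.2)) := by
  obtain ⟨f, hf, hsum⟩ := exists_analyticAt_hasSum_pow_smul (𝕜 := ℂ) (a := fun n => c (n, n))
    (pow_pos hr 2) fun n => by simpa only [← pow_mul, two_mul] using hc n n
  refine ⟨f, hf, fun w hw => ?_⟩
  have hxy : ‖w.1 * w.2‖ < r ^ 2 := by
    rw [norm_mul, sq]
    exact mul_lt_mul'' ((norm_fst_le w).trans_lt hw) ((norm_snd_le w).trans_lt hw)
      (norm_nonneg _) (norm_nonneg _)
  have hdiag : Function.Injective fun n : ℕ => (n, n) := fun _ _ h => congrArg Prod.fst h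
  refine (hdiag.hasSum_iff ?_).1 ((hsum _ hxy).congr_fun fun n => ?_)
  · rintro ⟨i, j⟩ hij
    exact if_neg fun h : i = j => hij ⟨i, by rw [h]⟩
  · simp [bivariateTerm, mul_pow]

theorem exists_eq_add_saddleDeriv {J : ℂ × ℂ → E} (hJ : AnalyticAt ℂ J 0) :
    ∃ (f : ℂ → E) (v : ℂ × ℂ → E), AnalyticAt ℂ f 0 ∧ AnalyticAt ℂ v 0 ∧ v 0 = 0 ∧
      ∀ᶠ w in 𝓝 0, J w = f (w.1 * w.2) + saddleDeriv v w := by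
  obtain ⟨r, M, c, hr, hc, hJc⟩ := exists_hasSum_bivariateTerm
    (hJ.eventually_analyticAt.mono fun w hw => hw.differentiableAt)
  obtain ⟨f, hf, hdiag⟩ := exists_analyticAt_hasSum_diagonal hr hc
  -- Since `0⁻¹ = 0`, the coefficients of this `v` vanish on the diagonal.
  have hd := hc.inv_sub_smul hr.le
  have hv : AnalyticAt ℂ (bivariateSum fun ij : ℕ × ℕ => ((ij.1 : ℂ) - ij.2)⁻¹ • c ij) 0 :=
    analyticAt_bivariateSum hr hd
  refine ⟨f, _, hf, hv, by simp [bivariateSum_zero], ?_⟩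
  filter_upwards [ball_mem_nhds 0 hr, hv.eventually_analyticAt] with w hw hvw
  have hwr : ‖w‖ < r := mem_ball_zero_iff.1 hw
  refine (hJc w hwr).unique (((hdiag w hwr).add
    (hasSum_saddleDeriv_bivariateSum hd hwr hvw.differentiableAt)).congr_fun fun ij => ?_)
  by_cases hij : ij.1 = ij.2
  · simp [hij]
  · have hne : (ij.1 : ℂ) - ij.2 ≠ 0 := sub_ne_zero.2 (mod_cast hij)
    rw [if_neg hij, zero_add, bivariateTerm, bivariateTerm, smul_comm (_ * _), smul_inv_smul₀ hne]

end HomologicalEquation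

section Shear

lemma saddleDeriv_zero (u : ℂ × ℂ → ℂ) : saddleDeriv u 0 = 0 := by
  simp [saddleDeriv, ← Prod.zero_eq_mk]

lemma saddleDeriv_comp_mul_mul {f : ℂ → ℂ} {u : ℂ × ℂ → ℂ} {w : ℂ × ℂ}
    (hf : DifferentiableAt ℂ f (w.1 * w.2)) (hu : DifferentiableAt ℂ u w) :
    saddleDeriv (fun z => f (z.1 * z.2) * u z) w = f (w.1 * w.2) * saddleDeriv u w := by
  have hxy : HasFDerivAt (fun z : ℂ × ℂ => z.1 * z.2) _ w :=
    HasFDerivAt.mul (𝕜 := ℂ) (E := ℂ × ℂ) hasFDerivAt_fst hasFDerivAt_snd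
  have hfxy : HasFDerivAt (fun z : ℂ × ℂ => f (z.1 * z.2)) _ w :=
    hf.hasDerivAt.comp_hasFDerivAt w hxy
  have hmul : HasFDerivAt (fun z => f (z.1 * z.2) * u z) _ w := hfxy.mul hu.hasFDerivAt
  rw [saddleDeriv, saddleDeriv, hmul.fderiv]
  simp only [add_apply, smul_apply, ContinuousLinearMap.coe_fst', ContinuousLinearMap.coe_snd',
    smul_eq_mul]
  ring

lemma analyticAt_comp_mul {f : ℂ → ℂ} (hf : AnalyticAt ℂ f 0) :
    AnalyticAt ℂ (fun w : ℂ × ℂ => f (w.1 * w.2)) 0 :=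
  hf.comp_of_eq (analyticAt_fst.mul analyticAt_snd) (mul_zero _)

lemma tendsto_mul_zero : Tendsto (fun w : ℂ × ℂ => w.1 * w.2) (𝓝 0) (𝓝 0) :=
  (continuous_fst.mul continuous_snd).tendsto' 0 0 (mul_zero _)

lemma exists_eq_mul_one_add_saddleDeriv {J : ℂ × ℂ → ℂ} (hJ : AnalyticAt ℂ J 0) (hJ0 : J 0 ≠ 0) :
    ∃ (f : ℂ → ℂ) (u : ℂ × ℂ → ℂ), AnalyticAt ℂ f 0 ∧ f 0 = J 0 ∧ AnalyticAt ℂ u 0 ∧ u 0 = 0 ∧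
      ∀ᶠ w in 𝓝 0, J w = f (w.1 * w.2) * (1 + saddleDeriv u w) := by
  obtain ⟨f, v, hf, hv, hv0, hJfv⟩ := exists_eq_add_saddleDeriv hJ
  have hf0 : f 0 = J 0 := by
    simpa [saddleDeriv_zero] using hJfv.self_of_nhds.symm
  have hf0' : f 0 ≠ 0 := hf0 ▸ hJ0
  refine ⟨f, fun w => (f (w.1 * w.2))⁻¹ * v w, hf, hf0,
    (analyticAt_comp_mul (hf.fun_inv hf0')).fun_mul hv, by simp [hv0], ?_⟩
  filter_upwards [hJfv, hv.eventually_analyticAt,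
    tendsto_mul_zero.eventually hf.eventually_analyticAt,
    tendsto_mul_zero.eventually (hf.continuousAt.eventually_ne hf0')] with w hw hvw hfw hne
  rw [saddleDeriv_comp_mul_mul (f := fun t => (f t)⁻¹) (hfw.differentiableAt.fun_inv hne)
    hvw.differentiableAt, mul_add, mul_one, mul_inv_cancel_left₀ hne, hw]

/-- The time `u w` map of the Hamiltonian flow of `x * y`, with the time depending on the point. -/
noncomputable def saddleShear (u : ℂ × ℂ → ℂ) (w : ℂ × ℂ) : ℂ × ℂ :=
  saddleFlow w (u w)

variable {u : ℂ × ℂ → ℂ} {w : ℂ × ℂ}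

lemma saddleShear_fst_mul_snd (u : ℂ × ℂ → ℂ) (w : ℂ × ℂ) :
    (saddleShear u w).1 * (saddleShear u w).2 = w.1 * w.2 := by
  rw [saddleShear, saddleFlow, mul_mul_mul_comm, ← exp_add, add_neg_cancel, exp_zero, mul_one]

lemma isTangentToId_saddleShear (hu : AnalyticAt ℂ u 0) (hu0 : u 0 = 0) :
    IsTangentToId ℂ (saddleShear u) := by
  have h := isTangentToId_of_matrix_eq_one hu.cexp analyticAt_const analyticAt_const hu.neg.cexp
    (by simp [hu0]) rfl rfl (by simp [hu0])
  have hshear : saddleShear u =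
      fun w => (exp (u w) * w.1 + 0 * w.2, 0 * w.1 + exp (-u w) * w.2) :=
    funext fun w => by simp [saddleShear, saddleFlow, mul_comm]
  rwa [hshear]

lemma det_fderiv_saddleShear (hu : DifferentiableAt ℂ u w) :
    (fderiv ℂ (saddleShear u) w).det = 1 + saddleDeriv u w := by
  have hfst : HasFDerivAt (fun z => z.1 * exp (u z)) _ w := hasFDerivAt_fst.mul hu.hasFDerivAt.cexp
  have hsnd : HasFDerivAt (fun z => z.2 * exp (-u z)) _ w :=
    hasFDerivAt_snd.mul hu.hasFDerivAt.neg.cexp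
  have hexp : exp (u w) * exp (-u w) = 1 := by rw [← exp_add, add_neg_cancel, exp_zero]
  have hsplit : saddleDeriv u w = w.1 * fderiv ℂ u w (1, 0) - w.2 * fderiv ℂ u w (0, 1) := by
    have hw : ((w.1, -w.2) : ℂ × ℂ) = w.1 • (1, 0) - w.2 • (0, 1) := by simp
    rw [saddleDeriv, hw, map_sub, map_smul, map_smul, smul_eq_mul, smul_eq_mul]
  have hshear : HasFDerivAt (saddleShear u) _ w := hfst.prodMk hsnd
  rw [hshear.fderiv, det_prod_eq, hsplit]
  simp only [ContinuousLinearMap.prod_apply, add_apply, smul_apply, neg_apply,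
    ContinuousLinearMap.coe_fst', ContinuousLinearMap.coe_snd', smul_eq_mul]
  linear_combination (1 + w.1 * fderiv ℂ u w (1, 0) - w.2 * fderiv ℂ u w (0, 1)) * hexp

end Shear

section NormalForm

variable {p q : ℂ × ℂ → ℂ}

/-- The germ of `p` at `0` has `q` as Vey normal form: some `F` tangent to the identity pulls `p`
back to `q` and the area form back to a multiple of itself by a function of `q`. -/
def HasVeyNormalForm (p q : ℂ × ℂ → ℂ) : Prop :=
  ∃ (F : ℂ × ℂ → ℂ × ℂ) (f : ℂ → ℂ), IsTangentToId ℂ F ∧ AnalyticAt ℂ f 0 ∧ f 0 = 1 ∧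
    ∀ᶠ w in 𝓝 0, p (F w) = q w ∧ (fderiv ℂ F w).det = f (q w)

theorem hasVeyNormalForm_mul (hp : AnalyticAt ℂ p 0)
    (hO : (fun w => p w - w.1 * w.2) =O[𝓝 0] fun w => ‖w‖ ^ 3) :
    HasVeyNormalForm p fun w => w.1 * w.2 := by
  obtain ⟨G, hG, hpG⟩ := exists_isTangentToId_comp_eq_mul hp hO
  have hJ0 : (fderiv ℂ G 0).det = 1 := by rw [hG.hasFDerivAt.fderiv, det_id]
  obtain ⟨f, u, hf, hf0, hu, hu0, hJ⟩ := exists_eq_mul_one_add_saddleDeriv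
    (analyticAt_det_fderiv hG.analyticAt) (hJ0 ▸ one_ne_zero)
  have hK := isTangentToId_saddleShear hu hu0
  obtain ⟨H, hH, hKH⟩ := hK.exists_rightInverse
  refine ⟨G ∘ H, f, hG.comp hH, hf, hf0.trans hJ0, ?_⟩
  filter_upwards [hKH.eventually_nhds, hH.tendsto.eventually hpG, hH.tendsto.eventually hJ,
    hH.analyticAt.eventually_analyticAt, hH.tendsto.eventually hG.analyticAt.eventually_analyticAt,
    hH.tendsto.eventually hK.analyticAt.eventually_analyticAt,
    hH.tendsto.eventually hu.eventually_analyticAt] with w hKHw hpw hJw hHw hGw hKw huw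
  have hxy : (H w).1 * (H w).2 = w.1 * w.2 := by
    rw [← saddleShear_fst_mul_snd u, hKHw.self_of_nhds]
  have hdet : (1 + saddleDeriv u (H w)) * (fderiv ℂ H w).det = 1 := by
    rw [← det_fderiv_saddleShear huw.differentiableAt]
    exact det_fderiv_mul_det_fderiv_eq_one hKw.differentiableAt hHw.differentiableAt hKHw
  refine ⟨hpw.trans hxy, ?_⟩
  rw [det_fderiv_comp hGw.differentiableAt hHw.differentiableAt, hJw, mul_assoc, hdet, mul_one, hxy]

theorem HasVeyNormalForm.comp_equiv (h : HasVeyNormalForm p q) (e : (ℂ × ℂ) ≃L[ℂ] ℂ × ℂ) :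
    HasVeyNormalForm (p ∘ e) (q ∘ e) := by
  obtain ⟨F, f, hF, hf, hf0, hFf⟩ := h
  have he : Tendsto e (𝓝 0) (𝓝 0) := e.continuous.tendsto' 0 0 e.map_zero
  refine ⟨e.symm ∘ F ∘ e, f, hF.conj e, hf, hf0, ?_⟩
  filter_upwards [he.eventually hFf, he.eventually hF.analyticAt.eventually_analyticAt]
    with w ⟨hpw, hdet⟩ hFw
  refine ⟨by simpa using hpw, ?_⟩
  rw [det_fderiv_conj e hFw.differentiableAt, hdet, Function.comp_apply]

end NormalForm

section QuadraticForm

section Field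

variable {K : Type*} [Field K] [IsAlgClosed K]

lemma exists_quadratic_root {a : K} (b c : K) (ha : a ≠ 0) : ∃ r, a * r ^ 2 + b * r + c = 0 := by
  obtain ⟨r, hr⟩ := IsAlgClosed.exists_root
    (Polynomial.C a * Polynomial.X ^ 2 + Polynomial.C b * Polynomial.X + Polynomial.C c)
    (by simp [Polynomial.degree_quadratic ha])
  exact ⟨r, by simpa using hr⟩

lemma exists_quadratic_eq_mul (a b c : K) :
    ∃ α β γ δ : K, ∀ x y : K,
      (α * x + β * y) * (γ * x + δ * y) = a * x ^ 2 + b * x * y + c * y ^ 2 := by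
  rcases eq_or_ne a 0 with rfl | ha
  · exact ⟨0, 1, b, c, fun x y => by ring⟩
  · obtain ⟨r, hr⟩ := exists_quadratic_root b c ha
    exact ⟨1, -r, a, b + a * r, fun x y => by linear_combination -y ^ 2 * hr⟩

end Field

variable {a b c : ℂ}

lemma exists_equiv_mul_eq_quadratic (hdisc : discrim a b c ≠ 0) :
    ∃ e : (ℂ × ℂ) ≃L[ℂ] ℂ × ℂ,
      ∀ w, (e w).1 * (e w).2 = a * w.1 ^ 2 + b * w.1 * w.2 + c * w.2 ^ 2 := by
  obtain ⟨α, β, γ, δ, hfactor⟩ := exists_quadratic_eq_mul a b c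
  have hα : α * γ = a := by simpa using hfactor 1 0
  have hδ : β * δ = c := by simpa using hfactor 0 1
  have hb : α * δ + β * γ = b := by linear_combination hfactor 1 1 - hα - hδ
  let L : ℂ × ℂ →L[ℂ] ℂ × ℂ :=
    (α • ContinuousLinearMap.fst ℂ ℂ ℂ + β • ContinuousLinearMap.snd ℂ ℂ ℂ).prod
      (γ • ContinuousLinearMap.fst ℂ ℂ ℂ + δ • ContinuousLinearMap.snd ℂ ℂ ℂ)
  have hL : L.det ^ 2 = discrim a b c := by
    rw [det_prod_eq, discrim, ← hα, ← hb, ← hδ]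
    simp only [L, ContinuousLinearMap.prod_apply, add_apply, smul_apply,
      ContinuousLinearMap.coe_fst', ContinuousLinearMap.coe_snd', smul_eq_mul]
    ring
  have hL0 : L.det ≠ 0 := by
    rw [← pow_ne_zero_iff two_ne_zero, hL]
    exact hdisc
  exact ⟨L.toContinuousLinearEquivOfDetNeZero hL0, fun w => hfactor w.1 w.2⟩

lemma exists_real_add_mul_real_eq {s : ℂ} (hs : s.im ≠ 0) (z : ℂ) :
    ∃ x y : ℝ, (x : ℂ) + s * y = z := by
  refine ⟨z.re - s.re * (z.im / s.im), z.im / s.im, Complex.ext ?_ ?_⟩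
  · simp
  · simp [mul_div_cancel₀ _ hs]

lemma quadratic_eq_mul_sq (ha : a ≠ 0) (hdisc : discrim a b c = 0) (x y : ℂ) :
    a * x ^ 2 + b * x * y + c * y ^ 2 = a * (x + b / (2 * a) * y) ^ 2 := by
  rw [discrim] at hdisc
  field_simp
  linear_combination -y ^ 2 * hdisc

lemma discrim_ne_zero_of_real_range_ne_univ
    (hrange : {z : ℂ | ∃ x y : ℝ, a * (x : ℂ) ^ 2 + b * x * y + c * (y : ℂ) ^ 2 = z} ≠ Set.univ)
    (hne : ∀ x y : ℝ, ¬(x = 0 ∧ y = 0) → a * (x : ℂ) ^ 2 + b * x * y + c * (y : ℂ) ^ 2 ≠ 0) :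
    discrim a b c ≠ 0 := by
  intro hdisc
  have ha : a ≠ 0 := by simpa using hne 1 0
  simp only [quadratic_eq_mul_sq ha hdisc] at hrange hne
  have hs : (b / (2 * a)).im ≠ 0 := by
    intro him
    have hreal : ((b / (2 * a)).re : ℂ) = b / (2 * a) := Complex.ext rfl him.symm
    exact hne (-(b / (2 * a)).re) 1 (by simp) (by simp [hreal])
  refine hrange (Set.eq_univ_of_forall fun z => ?_)
  obtain ⟨t, ht⟩ := IsAlgClosed.exists_pow_nat_eq (z / a) two_pos
  obtain ⟨x, y, rfl⟩ := exists_real_add_mul_real_eq hs t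
  exact ⟨x, y, by rw [ht, mul_div_cancel₀ _ ha]⟩

theorem hasVeyNormalForm_quadratic {p : ℂ × ℂ → ℂ} (hdisc : discrim a b c ≠ 0)
    (hp : AnalyticAt ℂ p 0)
    (hO : (fun w => p w - (a * w.1 ^ 2 + b * w.1 * w.2 + c * w.2 ^ 2)) =O[𝓝 0]
      fun w => ‖w‖ ^ 3) :
    HasVeyNormalForm p fun w => a * w.1 ^ 2 + b * w.1 * w.2 + c * w.2 ^ 2 := by
  obtain ⟨e, he⟩ := exists_equiv_mul_eq_quadratic hdisc
  have hsymm : Tendsto e.symm (𝓝 0) (𝓝 0) := e.symm.continuous.tendsto' 0 0 e.symm.map_zero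
  have hO' : (fun w => p (e.symm w) - w.1 * w.2) =O[𝓝 0] fun w => ‖w‖ ^ 3 := by
    refine ((hO.comp_tendsto hsymm).trans
      (((e.symm : ℂ × ℂ →L[ℂ] ℂ × ℂ).isBigO_id _).norm_norm.pow 3)).congr_left fun w => ?_
    simp [← he]
  have hpe : AnalyticAt ℂ (p ∘ e.symm) 0 := hp.comp_of_eq (e.symm.analyticAt 0) e.symm.map_zero
  have h := (hasVeyNormalForm_mul hpe hO').comp_equiv e
  simpa [Function.comp_def, he] using h

end QuadraticForm

end Vey

theorem stmt0_general
    (a b c : ℂ) (hdisc : discrim a b c ≠ 0) (q : ℂ × ℂ → ℂ)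
    (hq : ∀ w : ℂ × ℂ, q w = a * w.1 ^ 2 + b * w.1 * w.2 + c * w.2 ^ 2)
    (U : Set (ℂ × ℂ)) (hU : IsOpen U) (h0U : (0 : ℂ × ℂ) ∈ U)
    (p : ℂ × ℂ → ℂ) (hp : DifferentiableOn ℂ p U)
    (hpq : (fun w => p w - q w) =O[nhds 0] fun w => ‖w‖ ^ 3) :
    ∃ (ε : ℝ) (F : ℂ × ℂ → ℂ × ℂ) (Vf : Set ℂ) (f : ℂ → ℂ),
      0 < ε ∧
      DifferentiableOn ℂ F (ball 0 ε) ∧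
      Set.MapsTo F (ball 0 ε) U ∧
      F 0 = 0 ∧
      fderiv ℂ F 0 = ContinuousLinearMap.id ℂ (ℂ × ℂ) ∧
      IsOpen Vf ∧ (0 : ℂ) ∈ Vf ∧
      DifferentiableOn ℂ f Vf ∧ f 0 = 1 ∧
      ∀ w ∈ ball (0 : ℂ × ℂ) ε,
        p (F w) = q w ∧
        q w ∈ Vf ∧
        (fderiv ℂ F w (1, 0)).1 * (fderiv ℂ F w (0, 1)).2
          - (fderiv ℂ F w (0, 1)).1 * (fderiv ℂ F w (1, 0)).2 = f (q w) := by
  obtain rfl : q = fun w => a * w.1 ^ 2 + b * w.1 * w.2 + c * w.2 ^ 2 := funext hq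
  have hp0 : AnalyticAt ℂ p 0 :=
    Vey.analyticAt_of_eventually_differentiableAt <|
      (hU.eventually_mem h0U).mono fun w hw => hp.differentiableAt (hU.mem_nhds hw)
  obtain ⟨F, f, hF, hf, hf0, hFf⟩ := Vey.hasVeyNormalForm_quadratic hdisc hp0 hpq
  have hqf : ∀ᶠ w : ℂ × ℂ in nhds 0,
      AnalyticAt ℂ f (a * w.1 ^ 2 + b * w.1 * w.2 + c * w.2 ^ 2) :=
    (Continuous.tendsto' (by fun_prop) 0 0 (by simp)).eventually hf.eventually_analyticAt
  obtain ⟨ε, hε, hball⟩ := eventually_nhds_iff_ball.1 <| hFf.and <| hqf.and <|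
    (hF.tendsto.eventually (hU.eventually_mem h0U)).and hF.analyticAt.eventually_analyticAt
  choose hpF hfq hFU hFan using hball
  exact ⟨ε, F, {z | AnalyticAt ℂ f z}, f, hε,
    fun w hw => (hFan w hw).differentiableAt.differentiableWithinAt, hFU,
    hF.map_zero, hF.hasFDerivAt.fderiv, isOpen_analyticAt ℂ f, hf,
    fun z (hz : AnalyticAt ℂ f z) => hz.differentiableWithinAt, hf0,
    fun w hw => ⟨(hpF w hw).1, hfq w hw, (Vey.det_prod_eq _).symm.trans (hpF w hw).2⟩⟩

/-- Vey's Morse lemma in dimension two. -/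
theorem stmt0
    (m : ℝ) (hm : 0 < m)
    (a b c : ℂ) (q : ℂ × ℂ → ℂ)
    (hq : ∀ w : ℂ × ℂ, q w = a * w.1 ^ 2 + b * w.1 * w.2 + c * w.2 ^ 2)
    (hrange : {z : ℂ | ∃ x ξ : ℝ, q ((x : ℂ), (ξ : ℂ)) = z} ≠ Set.univ)
    (hnz : ∀ x ξ : ℝ, ¬(x = 0 ∧ ξ = 0) → q ((x : ℂ), (ξ : ℂ)) ≠ 0)
    (U : Set (ℂ × ℂ)) (hU : IsOpen U) (h0U : (0 : ℂ × ℂ) ∈ U)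
    (p : ℂ × ℂ → ℂ) (hp : DifferentiableOn ℂ p U)
    (hpq : Asymptotics.IsBigO (nhds (0 : ℂ × ℂ))
      (fun w : ℂ × ℂ => p w - q w) (fun w : ℂ × ℂ => ‖w‖ ^ 3)) :
    ∃ (ε : ℝ) (F : ℂ × ℂ → ℂ × ℂ) (Vf : Set ℂ) (f : ℂ → ℂ),
      0 < ε ∧
      DifferentiableOn ℂ F (Metric.ball (0 : ℂ × ℂ) ε) ∧
      Set.MapsTo F (Metric.ball (0 : ℂ × ℂ) ε) U ∧
      F 0 = 0 ∧
      fderiv ℂ F 0 = ContinuousLinearMap.id ℂ (ℂ × ℂ) ∧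
      IsOpen Vf ∧ (0 : ℂ) ∈ Vf ∧
      DifferentiableOn ℂ f Vf ∧ f 0 = 1 ∧
      ∀ w ∈ Metric.ball (0 : ℂ × ℂ) ε,
        p (F w) = q w ∧
        q w ∈ Vf ∧
        (fderiv ℂ F w (1, 0)).1 * (fderiv ℂ F w (0, 1)).2
          - (fderiv ℂ F w (0, 1)).1 * (fderiv ℂ F w (1, 0)).2 = f (q w) :=
  stmt0_general a b c (Vey.discrim_ne_zero_of_real_range_ne_univ (by simpa only [hq] using hrange)
    (by simpa only [hq] using hnz)) q hq U hU h0U p hp hpq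
end

section
/- There is an absolute constant K > 0 with the following property. Let δ > 0 and let r be a holomorphic function on an open subset of ℂ² containing the closed polydisc {(z,ζ) ∈ ℂ² : |z| ≤ δ, |ζ| ≤ δ}. Then there exist a function a holomorphic on the open polydisc Ω(δ) = {(z,ζ) : |z| < δ, |ζ| < δ} and a function r₀ holomorphic on the disc D(0,δ²) ⊆ ℂ such that for all (z,ζ) ∈ Ω(δ): i·(z·∂a/∂z(z,ζ) − ζ·∂a/∂ζ(z,ζ)) = −r(z,ζ) + r₀(z·ζ), and moreover sup_{Ω(δ)} |a| ≤ K·sup_{Ω(δ)} |r| and sup_{D(0,δ²)} |r₀| ≤ K·sup_{Ω(δ)} |r|. -/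
open Complex Metric

/-!
The field `i (z ∂_z - ζ ∂_ζ)` generates the `2π`-periodic flow `(z, ζ) ↦ (e^{it} z, e^{-it} ζ)`,
so the equation prescribes the derivative of `a` along its orbits. With the sawtooth weight `π - t`,
the orbit average `a = (2π)⁻¹ ∫₀^{2π} (π - t) r(φ_t ·) dt` has derivative `-r + A`, where `A` is the
plain average of `r` over the orbit. The function `A` is holomorphic and invariant under the flow;
invariance says `A (s z, ζ) = A (z, s ζ)` for `|s| = 1`, the maximum principle extends this to
`|s| ≤ 1`, and hence `A` is a holomorphic function `r₀` of the product `z ζ`. Both averages are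
bounded by `π sup |r|`.
-/

open Set Filter Topology MeasureTheory
open scoped Real

section HolomorphicFDeriv

variable {V E : Type*} [NormedAddCommGroup V] [NormedSpace ℂ V]
  [NormedAddCommGroup E] [NormedSpace ℂ E] {f : V → E}

lemma norm_fderiv_le_of_forall_mem_ball_norm_le {c : V} {ε M : ℝ} (hε : 0 < ε)
    (hf : DifferentiableOn ℂ f (ball c ε)) (hM : ∀ x ∈ ball c ε, ‖f x‖ ≤ M) :
    ‖fderiv ℂ f c‖ ≤ 2 * M / ε := by
  refine norm_fderiv_le_div_of_mapsTo_ball hf (fun x hx => ?_) hε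
  rw [mem_closedBall, dist_eq_norm, two_mul]
  exact norm_sub_le_of_le (hM x hx) (hM c (mem_ball_self hε))

lemma norm_fderiv_sub_le_of_lipschitz_ball {p q : V} {ε L : ℝ} (hε : 0 < ε)
    (hf : DifferentiableOn ℂ f (ball p (2 * ε)))
    (hL : ∀ x ∈ ball p (2 * ε), ∀ y ∈ ball p (2 * ε), ‖f x - f y‖ ≤ L * ‖x - y‖)
    (hq : q ∈ ball p ε) :
    ‖fderiv ℂ f q - fderiv ℂ f p‖ ≤ 2 * (L * ‖q - p‖) / ε := by
  have hball : ball p ε ⊆ ball p (2 * ε) := ball_subset_ball (by linarith)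
  have hshift : MapsTo (fun x => x + (q - p)) (ball p ε) (ball p (2 * ε)) := fun x hx => by
    rw [mem_ball_iff_norm] at hx hq ⊢
    calc ‖x + (q - p) - p‖ = ‖(x - p) + (q - p)‖ := by abel_nf
      _ < 2 * ε := by linarith [norm_add_le (x - p) (q - p)]
  have hdiff : ∀ x ∈ ball p (2 * ε), DifferentiableAt ℂ f x :=
    fun x hx => hf.differentiableAt (isOpen_ball.mem_nhds hx)
  have hfderiv : fderiv ℂ (fun x => f (x + (q - p)) - f x) p = fderiv ℂ f q - fderiv ℂ f p := by
    have hq' : DifferentiableAt ℂ f (p + (q - p)) := hdiff _ (hshift (mem_ball_self hε))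
    rw [fderiv_fun_sub (by fun_prop) (hdiff p (hball (mem_ball_self hε))),
      fderiv_comp_add_right, add_sub_cancel]
  rw [← hfderiv]
  refine norm_fderiv_le_of_forall_mem_ball_norm_le hε ?_ fun x hx => ?_
  · exact (hf.comp (by fun_prop) hshift).sub (hf.mono hball)
  · simpa using hL _ (hshift hx) x (hball hx)

lemma exists_lipschitz_ball_of_differentiableOn {U : Set V} (hU : IsOpen U)
    (hf : DifferentiableOn ℂ f U) {p : V} (hp : p ∈ U) :
    ∃ ε > 0, ∃ L, ball p ε ⊆ U ∧
      ∀ x ∈ ball p ε, ∀ y ∈ ball p ε, ‖f x - f y‖ ≤ L * ‖x - y‖ := by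
  have hcont : ContinuousAt f p := hf.continuousOn.continuousAt (hU.mem_nhds hp)
  obtain ⟨ε, hε, hball⟩ := Metric.eventually_nhds_iff_ball.1
    ((hU.eventually_mem hp).and (hcont.norm.eventually_lt_const (lt_add_one ‖f p‖)))
  have hsub : ∀ x ∈ ball p (ε / 2), ball x (ε / 2) ⊆ ball p ε := fun x hx =>
    ball_subset_ball' (by linarith [mem_ball.1 hx])
  have hfderiv : ∀ x ∈ ball p (ε / 2), ‖fderiv ℂ f x‖ ≤ 2 * (‖f p‖ + 1) / (ε / 2) := fun x hx =>
    norm_fderiv_le_of_forall_mem_ball_norm_le (half_pos hε)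
      (hf.mono fun y hy => (hball y (hsub x hx hy)).1) fun y hy => (hball y (hsub x hx hy)).2.le
  have hhalf : ball p (ε / 2) ⊆ U := fun x hx =>
    (hball x (ball_subset_ball (half_le_self hε.le) hx)).1
  exact ⟨ε / 2, half_pos hε, _, hhalf, fun x hx y hy =>
    (convex_ball p (ε / 2)).norm_image_sub_le_of_norm_fderiv_le
      (fun z hz => hf.differentiableAt (hU.mem_nhds (hhalf hz))) hfderiv hy hx⟩

lemma continuousOn_fderiv_of_differentiableOn {U : Set V} (hU : IsOpen U)
    (hf : DifferentiableOn ℂ f U) : ContinuousOn (fderiv ℂ f) U := by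
  intro p hp
  obtain ⟨ε, hε, L, hball, hL⟩ := exists_lipschitz_ball_of_differentiableOn hU hf hp
  obtain ⟨η, rfl⟩ : ∃ η, ε = 2 * η := ⟨ε / 2, by ring⟩
  have hη : 0 < η := by linarith
  refine ContinuousAt.continuousWithinAt (tendsto_iff_norm_sub_tendsto_zero.2 ?_)
  have hbound : Tendsto (fun q => 2 * (L * ‖q - p‖) / η) (𝓝 p) (𝓝 0) :=
    Continuous.tendsto' (by fun_prop) _ _ (by simp)
  refine squeeze_zero' (Eventually.of_forall fun q => norm_nonneg _) ?_ hbound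
  filter_upwards [ball_mem_nhds p hη] with q hq
  exact norm_fderiv_sub_le_of_lipschitz_ball hη (hf.mono hball) hL hq

end HolomorphicFDeriv

lemma hasFDerivAt_intervalIntegral_of_continuousOn {𝕜 V E : Type*} [RCLike 𝕜]
    [NormedAddCommGroup V] [NormedSpace 𝕜 V] [NormedAddCommGroup E] [NormedSpace ℝ E]
    [NormedSpace 𝕜 E] {U : Set V} (hU : IsOpen U) {F : V → ℝ → E} {F' : V → ℝ → V →L[𝕜] E}
    (hF : ∀ q ∈ U, Continuous (F q)) (hF' : ContinuousOn (Function.uncurry F') (U ×ˢ univ))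
    (hderiv : ∀ q ∈ U, ∀ t, HasFDerivAt (fun x => F x t) (F' q t) q) {p : V} (hp : p ∈ U)
    (a b : ℝ) :
    HasFDerivAt (fun q => ∫ t in a..b, F q t) (∫ t in a..b, F' p t) p := by
  have hF'p : Continuous (F' p) :=
    hF'.comp_continuous (Continuous.prodMk_right p) fun t => ⟨hp, mem_univ t⟩
  obtain ⟨M, hM⟩ := isCompact_uIcc.exists_bound_of_continuousOn (hF'p.continuousOn (s := uIcc a b))
  have hbound : ∀ᶠ q in 𝓝 p, ∀ t ∈ uIcc a b, ‖F' q t‖ < M + 1 :=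
    isCompact_uIcc.eventually_forall_of_forall_eventually fun t ht =>
      (hF'.continuousAt ((hU.prod isOpen_univ).mem_nhds
        ⟨hp, mem_univ t⟩)).norm.eventually_lt_const (lt_add_of_le_of_pos (hM t ht) one_pos)
  refine intervalIntegral.hasFDerivAt_integral_of_dominated_of_fderiv_le
    (bound := fun _ => M + 1) (hbound.and (hU.mem_nhds hp)) ?_ ((hF p hp).intervalIntegrable a b)
    hF'p.aestronglyMeasurable ?_ intervalIntegrable_const ?_
  · filter_upwards [hU.mem_nhds hp] with q hq using (hF q hq).aestronglyMeasurable
  · exact Eventually.of_forall fun t ht q hq => (hq.1 t (uIoc_subset_uIcc ht)).le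
  · exact Eventually.of_forall fun t _ q hq => hderiv q hq.2 t

section Sawtooth

variable {E : Type*} [NormedAddCommGroup E] [NormedSpace ℝ E] {g : ℝ → E} {T : ℝ}

lemma intervalIntegral_sub_smul_comp_add (hg : Continuous g) (hT : Function.Periodic g T)
    (c s : ℝ) :
    ∫ t in 0..T, (c - t) • g (t + s) =
      (c + s) • (∫ t in 0..T, g t) - ((∫ t in 0..(s + T), t • g t) - ∫ t in 0..s, t • g t) := by
  have hint {h : ℝ → E} (hh : Continuous h) (a b : ℝ) : IntervalIntegrable h volume a b :=
    hh.intervalIntegrable a b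
  calc ∫ t in 0..T, (c - t) • g (t + s)
      = ∫ t in 0..T, ((c + s) • g (t + s) - (t + s) • g (t + s)) := by
        simp only [← sub_smul, add_sub_add_right_eq_sub]
    _ = ∫ t in s..(s + T), ((c + s) • g t - t • g t) := by
        rw [intervalIntegral.integral_comp_add_right fun t => (c + s) • g t - t • g t, zero_add,
          add_comm T]
    _ = (c + s) • (∫ t in s..(s + T), g t) - ∫ t in s..(s + T), t • g t := by
        rw [intervalIntegral.integral_sub (hint (by fun_prop) _ _) (hint (by fun_prop) _ _),
          intervalIntegral.integral_smul]
    _ = _ := by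
        rw [hT.intervalIntegral_add_eq s 0, zero_add,
          intervalIntegral.integral_interval_sub_left (hint (by fun_prop) _ _)
            (hint (by fun_prop) _ _)]

lemma hasDerivAt_intervalIntegral_sub_smul_comp_add [CompleteSpace E] (hg : Continuous g)
    (hT : Function.Periodic g T) (c s : ℝ) :
    HasDerivAt (fun s => ∫ t in 0..T, (c - t) • g (t + s)) ((∫ t in 0..T, g t) - T • g s) s := by
  have hmoment : Continuous fun t => t • g t := by fun_prop
  have hendpoint (u : ℝ) : HasDerivAt (fun u => ∫ t in 0..u, t • g t) (u • g u) u :=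
    (hmoment.integral_hasStrictDerivAt 0 u).hasDerivAt
  have hlinear := ((hasDerivAt_id' s).const_add c).smul_const (∫ t in 0..T, g t)
  simp only [intervalIntegral_sub_smul_comp_add hg hT]
  refine (hlinear.sub (((hendpoint (s + T)).comp_add_const s T).sub (hendpoint s))).congr_deriv ?_
  rw [hT s, one_smul, ← sub_smul, add_sub_cancel_left]

end Sawtooth

section CounterRotation

/-- The flow `(z, ζ) ↦ (e^{it} z, e^{-it} ζ)` of the vector field `i (z ∂_z - ζ ∂_ζ)`, as a
`ℂ`-linear map at each time `t`. -/
noncomputable def counterRotation (t : ℝ) : ℂ × ℂ →L[ℂ] ℂ × ℂ :=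
  ContinuousLinearMap.prodMap (cexp (t * I) • .id ℂ ℂ) (cexp (-(t * I)) • .id ℂ ℂ)

lemma counterRotation_apply (t : ℝ) (p : ℂ × ℂ) :
    counterRotation t p = (cexp (t * I) * p.1, cexp (-(t * I)) * p.2) := rfl

lemma counterRotation_zero_apply (p : ℂ × ℂ) : counterRotation 0 p = p := by
  simp [counterRotation_apply]

lemma counterRotation_add_apply (s t : ℝ) (p : ℂ × ℂ) :
    counterRotation (s + t) p = counterRotation s (counterRotation t p) := by
  simp only [counterRotation_apply, ofReal_add, add_mul, neg_add, Complex.exp_add, mul_assoc]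

lemma counterRotation_periodic : Function.Periodic counterRotation (2 * π) := by
  intro t
  have hexp : cexp ((t + 2 * π : ℝ) * I) = cexp (t * I) := by
    push_cast
    rw [add_mul, Complex.exp_add, exp_two_pi_mul_I, mul_one]
  simp only [counterRotation, Complex.exp_neg, hexp]

lemma continuous_counterRotation : Continuous counterRotation :=
  (ContinuousLinearMap.prodMapL ℂ ℂ ℂ ℂ ℂ).continuous.comp (by fun_prop : Continuous fun t : ℝ =>
    (cexp (t * I) • ContinuousLinearMap.id ℂ ℂ, cexp (-(t * I)) • ContinuousLinearMap.id ℂ ℂ))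

lemma hasDerivAt_counterRotation_zero (p : ℂ × ℂ) :
    HasDerivAt (fun t => counterRotation t p) (I * p.1, -(I * p.2)) 0 := by
  have hlin : HasDerivAt (fun t : ℝ => (t : ℂ) * I) I 0 := by
    simpa using (ofRealCLM.hasDerivAt (x := 0)).mul_const I
  simpa using! (hlin.cexp.mul_const p.1).prodMk (hlin.neg.cexp.mul_const p.2)

/-- The open bidisc `{(z, ζ) : |z| < R₁, |ζ| < R₂}`, the domain on which the equation is solved;
the paper's `Ω(δ)` is `bidisc δ δ`. -/
abbrev bidisc (R₁ R₂ : ℝ) : Set (ℂ × ℂ) := ball 0 R₁ ×ˢ ball 0 R₂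

lemma isOpen_bidisc (R₁ R₂ : ℝ) : IsOpen (bidisc R₁ R₂) := isOpen_ball.prod isOpen_ball

lemma mapsTo_counterRotation_bidisc (R₁ R₂ : ℝ) (t : ℝ) :
    MapsTo (counterRotation t) (bidisc R₁ R₂) (bidisc R₁ R₂) := by
  have hneg : ‖cexp (-(t * I))‖ = 1 := by simpa using norm_exp_ofReal_mul_I (-t)
  simp [MapsTo, counterRotation_apply, norm_exp_ofReal_mul_I, hneg]

end CounterRotation

section OrbitAverage

variable {E : Type*} [NormedAddCommGroup E] [NormedSpace ℂ E]

/-- The average of `r` over the orbit of `p` under the counter-rotation with time weight `c` on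
`[0, 2π]`. The weight `1` gives the plain average, the weight `π - t` the solution `a`. -/
noncomputable def orbitAverage (c : ℝ → ℝ) (r : ℂ × ℂ → E) (p : ℂ × ℂ) : E :=
  (2 * π)⁻¹ • ∫ t in 0..(2 * π), c t • r (counterRotation t p)

lemma norm_orbitAverage_le {c : ℝ → ℝ} {r : ℂ × ℂ → E} {p : ℂ × ℂ} {C M : ℝ}
    (hc : ∀ t ∈ Icc 0 (2 * π), |c t| ≤ C) (hr : ∀ t, ‖r (counterRotation t p)‖ ≤ M) :
    ‖orbitAverage c r p‖ ≤ C * M := by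
  have hint : ‖∫ t in 0..(2 * π), c t • r (counterRotation t p)‖ ≤ C * M * |2 * π - 0| := by
    refine intervalIntegral.norm_integral_le_of_norm_le_const fun t ht => ?_
    rw [uIoc_of_le Real.two_pi_pos.le] at ht
    have hct := hc t (Ioc_subset_Icc_self ht)
    rw [norm_smul, Real.norm_eq_abs]
    exact mul_le_mul hct (hr t) (norm_nonneg _) ((abs_nonneg _).trans hct)
  rw [sub_zero, abs_of_pos Real.two_pi_pos] at hint
  rw [orbitAverage, norm_smul, norm_inv, Real.norm_of_nonneg Real.two_pi_pos.le,
    inv_mul_le_iff₀ Real.two_pi_pos, mul_comm (2 * π)]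
  exact hint

lemma orbitAverage_one_counterRotation (r : ℂ × ℂ → E) (s : ℝ) (p : ℂ × ℂ) :
    orbitAverage 1 r (counterRotation s p) = orbitAverage 1 r p := by
  have hper : Function.Periodic (fun t => r (counterRotation t p)) (2 * π) :=
    counterRotation_periodic.comp fun L => r (L p)
  simp only [orbitAverage, Pi.one_apply, one_smul, ← counterRotation_add_apply]
  rw [intervalIntegral.integral_comp_add_right fun t => r (counterRotation t p), zero_add,
    add_comm, hper.intervalIntegral_add_eq s 0, zero_add]

variable {U : Set (ℂ × ℂ)} {r : ℂ × ℂ → E}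

lemma differentiableOn_orbitAverage {c : ℝ → ℝ} (hc : Continuous c) (hU : IsOpen U)
    (hrot : ∀ t, MapsTo (counterRotation t) U U) (hr : DifferentiableOn ℂ r U) :
    DifferentiableOn ℂ (orbitAverage c r) U := by
  have horbit (q : ℂ × ℂ) : Continuous fun t => counterRotation t q :=
    continuous_counterRotation.clm_apply continuous_const
  have hflow : Continuous fun x : (ℂ × ℂ) × ℝ => counterRotation x.2 x.1 :=
    (continuous_counterRotation.comp continuous_snd).clm_apply continuous_fst
  have hfderiv : ContinuousOn (Function.uncurry fun q t =>
      c t • (fderiv ℂ r (counterRotation t q)).comp (counterRotation t)) (U ×ˢ univ) :=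
    (hc.comp continuous_snd).continuousOn.smul
      (((continuousOn_fderiv_of_differentiableOn hU hr).comp hflow.continuousOn
        fun x hx => hrot x.2 hx.1).clm_comp
          (continuous_counterRotation.comp continuous_snd).continuousOn)
  have hderiv (q : ℂ × ℂ) (hq : q ∈ U) (t : ℝ) :
      HasFDerivAt (fun x => c t • r (counterRotation t x))
        (c t • (fderiv ℂ r (counterRotation t q)).comp (counterRotation t)) q :=
    ((hr.differentiableAt (hU.mem_nhds (hrot t hq))).hasFDerivAt.comp q
      (counterRotation t).hasFDerivAt).const_smul (c t)
  intro p hp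
  exact ((hasFDerivAt_intervalIntegral_of_continuousOn hU
    (fun q hq => hc.smul (hr.continuousOn.comp_continuous (horbit q) fun t => hrot t hq)) hfderiv
    hderiv hp 0 (2 * π)).const_smul (2 * π)⁻¹).differentiableAt.differentiableWithinAt

lemma hasDerivAt_orbitAverage_pi_sub_counterRotation [CompleteSpace E]
    (hrot : ∀ t, MapsTo (counterRotation t) U U) (hr : ContinuousOn r U) {p : ℂ × ℂ} (hp : p ∈ U) :
    HasDerivAt (fun s => orbitAverage (fun t => π - t) r (counterRotation s p))
      (orbitAverage 1 r p - r p) 0 := by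
  have hcont : Continuous fun t => r (counterRotation t p) :=
    hr.comp_continuous (continuous_counterRotation.clm_apply continuous_const) fun t => hrot t hp
  have hper : Function.Periodic (fun t => r (counterRotation t p)) (2 * π) :=
    counterRotation_periodic.comp fun L => r (L p)
  simp only [orbitAverage, ← counterRotation_add_apply, Pi.one_apply, one_smul]
  refine ((hasDerivAt_intervalIntegral_sub_smul_comp_add hcont hper π 0).const_smul
    (2 * π)⁻¹).congr_deriv ?_
  rw [smul_sub, inv_smul_smul₀ Real.two_pi_pos.ne', counterRotation_zero_apply]

lemma fderiv_apply_I_mul_neg_I_mul {a : ℂ × ℂ → E} {z ζ : ℂ} (ha : DifferentiableAt ℂ a (z, ζ)) :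
    fderiv ℂ a (z, ζ) (I * z, -(I * ζ)) =
      I • (z • deriv (fun w => a (w, ζ)) z - ζ • deriv (fun w => a (z, w)) ζ) := by
  have hfst : HasDerivAt (fun w => a (w, ζ)) (fderiv ℂ a (z, ζ) (1, 0)) z :=
    ha.hasFDerivAt.comp_hasDerivAt z ((hasDerivAt_id z).prodMk (hasDerivAt_const z ζ))
  have hsnd : HasDerivAt (fun w => a (z, w)) (fderiv ℂ a (z, ζ) (0, 1)) ζ :=
    ha.hasFDerivAt.comp_hasDerivAt ζ ((hasDerivAt_const ζ z).prodMk (hasDerivAt_id ζ))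
  rw [hfst.deriv, hsnd.deriv, ← map_smul, ← map_smul, ← map_sub, ← map_smul]
  simp

lemma orbitAverage_homological_equation [CompleteSpace E] (hU : IsOpen U)
    (hrot : ∀ t, MapsTo (counterRotation t) U U) (hr : DifferentiableOn ℂ r U) {z ζ : ℂ}
    (hp : (z, ζ) ∈ U) :
    I • (z • deriv (fun w => orbitAverage (fun t => π - t) r (w, ζ)) z -
        ζ • deriv (fun w => orbitAverage (fun t => π - t) r (z, w)) ζ) =
      -r (z, ζ) + orbitAverage 1 r (z, ζ) := by
  have ha : DifferentiableAt ℂ (orbitAverage (fun t => π - t) r) (z, ζ) :=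
    (differentiableOn_orbitAverage (by fun_prop) hU hrot hr).differentiableAt (hU.mem_nhds hp)
  have hchain : HasDerivAt
      (fun s => orbitAverage (fun t => π - t) r (counterRotation s (z, ζ)))
      (fderiv ℂ (orbitAverage (fun t => π - t) r) (z, ζ) (I * z, -(I * ζ))) 0 :=
    (ha.hasFDerivAt.restrictScalars ℝ).comp_hasDerivAt_of_eq 0
      (hasDerivAt_counterRotation_zero (z, ζ)) (counterRotation_zero_apply (z, ζ)).symm
  rw [← fderiv_apply_I_mul_neg_I_mul ha, neg_add_eq_sub]
  exact hchain.unique (hasDerivAt_orbitAverage_pi_sub_counterRotation hrot hr.continuousOn hp)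

end OrbitAverage

section Invariants

variable {E : Type*} [NormedAddCommGroup E] [NormedSpace ℂ E] {R₁ R₂ : ℝ} {A : ℂ × ℂ → E}

lemma apply_mul_left_eq_apply_mul_right_of_invariant (hA : DifferentiableOn ℂ A (bidisc R₁ R₂))
    (hinv : ∀ t, ∀ p ∈ bidisc R₁ R₂, A (counterRotation t p) = A p) {z ζ s : ℂ}
    (hz : ‖z‖ < R₁) (hζ : ‖ζ‖ < R₂) (hs : ‖s‖ ≤ 1) : A (s * z, ζ) = A (z, s * ζ) := by
  have hmul {x w : ℂ} {R : ℝ} (hw : ‖w‖ < R) (hx : ‖x‖ ≤ 1) : x * w ∈ ball 0 R := by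
    rw [mem_ball_zero_iff, norm_mul]
    exact (mul_le_of_le_one_left (norm_nonneg w) hx).trans_lt hw
  have hleft : DifferentiableOn ℂ (fun x => A (x * z, ζ)) (closedBall 0 1) :=
    hA.comp (by fun_prop) fun x hx => ⟨hmul hz (mem_closedBall_zero_iff.1 hx), by simpa using hζ⟩
  have hright : DifferentiableOn ℂ (fun x => A (z, x * ζ)) (closedBall 0 1) :=
    hA.comp (by fun_prop) fun x hx => ⟨by simpa using hz, hmul hζ (mem_closedBall_zero_iff.1 hx)⟩
  have hclosure : closure (ball (0 : ℂ) 1) = closedBall 0 1 := closure_ball 0 one_ne_zero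
  have hboundary : EqOn (fun x => A (x * z, ζ)) (fun x => A (z, x * ζ)) (frontier (ball 0 1)) := by
    intro x hx
    rw [frontier_ball 0 one_ne_zero, mem_sphere_zero_iff_norm] at hx
    obtain ⟨θ, rfl⟩ := (norm_eq_one_iff x).1 hx
    have hmem : (z, cexp (θ * I) * ζ) ∈ bidisc R₁ R₂ := ⟨by simpa using hz, hmul hζ hx.le⟩
    simpa [counterRotation_apply, ← mul_assoc, ← Complex.exp_add] using hinv θ _ hmem
  exact eqOn_closure_of_eqOn_frontier isBounded_ball (hclosure ▸ hleft).diffContOnCl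
    (hclosure ▸ hright).diffContOnCl hboundary (hclosure ▸ mem_closedBall_zero_iff.2 hs)

lemma apply_eq_apply_of_mul_eq_of_invariant (hA : DifferentiableOn ℂ A (bidisc R₁ R₂))
    (hinv : ∀ t, ∀ p ∈ bidisc R₁ R₂, A (counterRotation t p) = A p) {p q : ℂ × ℂ}
    (hp : p ∈ bidisc R₁ R₂) (hq : q ∈ bidisc R₁ R₂) (hpq : p.1 * p.2 = q.1 * q.2) : A p = A q := by
  wlog hle : ‖p.1‖ ≤ ‖q.1‖ generalizing p q
  · exact (this hq hp hpq.symm (le_of_not_ge hle)).symm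
  obtain ⟨z, ζ⟩ := p
  obtain ⟨z', ζ'⟩ := q
  simp only [mem_prod, mem_ball_zero_iff] at hp hq hpq hle
  rcases eq_or_ne z' 0 with rfl | hz'
  · obtain rfl : z = 0 := by simpa using hle
    have hzero {w : ℂ} (hw : ‖w‖ < R₂) : A (0, w) = A (0, 0) := by
      simpa using apply_mul_left_eq_apply_mul_right_of_invariant hA hinv hq.1 hw (s := 0) (by simp)
    exact (hzero hp.2).trans (hzero hq.2).symm
  · have hs : ‖z / z'‖ ≤ 1 := by
      rw [norm_div]
      exact div_le_one_of_le₀ hle (norm_nonneg z')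
    have hζ' : z / z' * ζ = ζ' := by rw [div_mul_eq_mul_div, hpq, mul_div_cancel_left₀ ζ' hz']
    simpa [div_mul_cancel₀ z hz', hζ'] using
      apply_mul_left_eq_apply_mul_right_of_invariant hA hinv hq.1 hp.2 hs

lemma exists_norm_lt_and_norm_div_lt (hR₁ : 0 < R₁) (hR₂ : 0 < R₂) {w : ℂ}
    (hw : ‖w‖ < R₁ * R₂) : ∃ z : ℂ, z ≠ 0 ∧ ‖z‖ < R₁ ∧ ‖w / z‖ < R₂ := by
  obtain ⟨ρ, hρ, hρR₁⟩ := exists_between (max_lt hR₁ ((div_lt_iff₀ hR₂).2 hw))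
  obtain ⟨hρ₀, hwρ⟩ := max_lt_iff.1 hρ
  refine ⟨ρ, ofReal_ne_zero.2 hρ₀.ne', ?_, ?_⟩
  · rwa [Complex.norm_of_nonneg hρ₀.le]
  · rwa [norm_div, Complex.norm_of_nonneg hρ₀.le, div_lt_comm₀ hρ₀ hR₂]

lemma exists_differentiableOn_comp_mul_of_invariant (hR₁ : 0 < R₁) (hR₂ : 0 < R₂)
    (hA : DifferentiableOn ℂ A (bidisc R₁ R₂))
    (hinv : ∀ t, ∀ p ∈ bidisc R₁ R₂, A (counterRotation t p) = A p) :
    ∃ g : ℂ → E, DifferentiableOn ℂ g (ball 0 (R₁ * R₂)) ∧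
      ∀ p ∈ bidisc R₁ R₂, A p = g (p.1 * p.2) := by
  choose! z hz₀ hz hwz using fun w : ℂ => exists_norm_lt_and_norm_div_lt hR₁ hR₂ (w := w)
  have hlift {w x : ℂ} (hw : ‖w‖ < R₁ * R₂) (hx : ‖x / z w‖ < R₂) :
      (z w, x / z w) ∈ bidisc R₁ R₂ := ⟨by simpa using hz w hw, by simpa using hx⟩
  have hfactor : ∀ p ∈ bidisc R₁ R₂, ∀ w, ‖w‖ < R₁ * R₂ → p.1 * p.2 = w →
      A p = A (z w, w / z w) := fun p hp w hw hpw =>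
    apply_eq_apply_of_mul_eq_of_invariant hA hinv hp (hlift hw (hwz w hw))
      (by rw [hpw, mul_div_cancel₀ w (hz₀ w hw)])
  refine ⟨fun w => A (z w, w / z w), fun w hw => ?_, fun p hp => hfactor p hp _ ?_ rfl⟩
  · rw [mem_ball_zero_iff] at hw
    have hslice : DifferentiableAt ℂ (fun x => A (z w, x / z w)) w :=
      (hA.differentiableAt ((isOpen_bidisc R₁ R₂).mem_nhds (hlift hw (hwz w hw)))).comp w
        (by fun_prop)
    have hcont : Continuous fun x => ‖x / z w‖ := by fun_prop
    refine (hslice.congr_of_eventuallyEq ?_).differentiableWithinAt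
    filter_upwards [hcont.continuousAt.eventually_lt_const (hwz w hw),
      continuous_norm.continuousAt.eventually_lt_const hw] with x hxw hx
    exact (hfactor _ (hlift hw hxw) x hx (mul_div_cancel₀ x (hz₀ w hw))).symm
  · rw [norm_mul]
    exact mul_lt_mul'' (mem_ball_zero_iff.1 hp.1) (mem_ball_zero_iff.1 hp.2) (norm_nonneg _)
      (norm_nonneg _)

end Invariants

theorem stmt3_general {E : Type*} [NormedAddCommGroup E] [NormedSpace ℂ E] [CompleteSpace E]
    {R₁ R₂ : ℝ} (hR₁ : 0 < R₁) (hR₂ : 0 < R₂) {r : ℂ × ℂ → E}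
    (hr : DifferentiableOn ℂ r (bidisc R₁ R₂))
    (hbdd : BddAbove ((fun p => ‖r p‖) '' bidisc R₁ R₂)) :
    ∃ (a : ℂ × ℂ → E) (r₀ : ℂ → E),
      DifferentiableOn ℂ a (bidisc R₁ R₂) ∧
      DifferentiableOn ℂ r₀ (ball 0 (R₁ * R₂)) ∧
      (∀ z ζ : ℂ, z ∈ ball 0 R₁ → ζ ∈ ball 0 R₂ →
        I • (z • deriv (fun w => a (w, ζ)) z - ζ • deriv (fun w => a (z, w)) ζ) =
          -r (z, ζ) + r₀ (z * ζ)) ∧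
      (∀ z ζ : ℂ, z ∈ ball 0 R₁ → ζ ∈ ball 0 R₂ →
        ‖a (z, ζ)‖ ≤ π * sSup ((fun p => ‖r p‖) '' bidisc R₁ R₂)) ∧
      ∀ w ∈ ball 0 (R₁ * R₂), ‖r₀ w‖ ≤ π * sSup ((fun p => ‖r p‖) '' bidisc R₁ R₂) := by
  have hrot := mapsTo_counterRotation_bidisc R₁ R₂
  have hU := isOpen_bidisc R₁ R₂
  have horbit {p : ℂ × ℂ} (hp : p ∈ bidisc R₁ R₂) (t : ℝ) :
      ‖r (counterRotation t p)‖ ≤ sSup ((fun p => ‖r p‖) '' bidisc R₁ R₂) :=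
    le_csSup hbdd (mem_image_of_mem _ (hrot t hp))
  obtain ⟨r₀, hr₀, hmean⟩ := exists_differentiableOn_comp_mul_of_invariant hR₁ hR₂
    (differentiableOn_orbitAverage (c := 1) continuous_one hU hrot hr)
    fun t p _ => orbitAverage_one_counterRotation r t p
  refine ⟨orbitAverage (fun t => π - t) r, r₀,
    differentiableOn_orbitAverage (by fun_prop) hU hrot hr, hr₀, fun z ζ hz hζ => ?_,
    fun z ζ hz hζ => norm_orbitAverage_le (fun t ht => ?_) (horbit ⟨hz, hζ⟩), fun w hw => ?_⟩
  · rw [orbitAverage_homological_equation hU hrot hr ⟨hz, hζ⟩, hmean (z, ζ) ⟨hz, hζ⟩]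
  · exact abs_le.2 ⟨by linarith [ht.2], by linarith [ht.1]⟩
  · obtain ⟨z, hz₀, hz, hwz⟩ := exists_norm_lt_and_norm_div_lt hR₁ hR₂ (mem_ball_zero_iff.1 hw)
    have hp : (z, w / z) ∈ bidisc R₁ R₂ := ⟨mem_ball_zero_iff.2 hz, mem_ball_zero_iff.2 hwz⟩
    rw [← mul_div_cancel₀ w hz₀, ← hmean _ hp]
    exact norm_orbitAverage_le (fun t _ => by simpa using one_le_two.trans Real.two_le_pi)
      (horbit hp)

/-- Solution of the averaging (cohomological) equation
i(z∂_z − ζ∂_ζ)a = −r + r₀(zζ) on a polydisc, with uniform bounds given by an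
absolute constant K. -/
theorem stmt3 :
    ∃ K : ℝ, 0 < K ∧
      ∀ δ : ℝ, 0 < δ →
      ∀ U : Set (ℂ × ℂ), IsOpen U →
        (Metric.closedBall (0 : ℂ) δ ×ˢ Metric.closedBall (0 : ℂ) δ) ⊆ U →
      ∀ r : ℂ × ℂ → ℂ, DifferentiableOn ℂ r U →
      ∃ (a : ℂ × ℂ → ℂ) (r₀ : ℂ → ℂ),
        DifferentiableOn ℂ a (Metric.ball (0 : ℂ) δ ×ˢ Metric.ball (0 : ℂ) δ) ∧
        DifferentiableOn ℂ r₀ (Metric.ball (0 : ℂ) (δ ^ 2)) ∧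
        (∀ z ζ : ℂ, z ∈ Metric.ball (0 : ℂ) δ → ζ ∈ Metric.ball (0 : ℂ) δ →
          Complex.I * (z * deriv (fun w => a (w, ζ)) z - ζ * deriv (fun w => a (z, w)) ζ)
            = - r (z, ζ) + r₀ (z * ζ)) ∧
        (∀ z ζ : ℂ, z ∈ Metric.ball (0 : ℂ) δ → ζ ∈ Metric.ball (0 : ℂ) δ →
          ‖a (z, ζ)‖ ≤
            K * sSup ((fun w => ‖r w‖) '' (Metric.ball (0 : ℂ) δ ×ˢ Metric.ball (0 : ℂ) δ))) ∧
        (∀ w ∈ Metric.ball (0 : ℂ) (δ ^ 2),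
          ‖r₀ w‖ ≤
            K * sSup ((fun w => ‖r w‖) '' (Metric.ball (0 : ℂ) δ ×ˢ Metric.ball (0 : ℂ) δ))) := by
  refine ⟨π, Real.pi_pos, fun δ hδ U _ hU r hr => ?_⟩
  have hbdd := ((isCompact_closedBall 0 δ).prod (isCompact_closedBall 0 δ)).bddAbove_image
    (hr.continuousOn.norm.mono hU)
  have hsub : bidisc δ δ ⊆ closedBall 0 δ ×ˢ closedBall 0 δ :=
    prod_mono ball_subset_closedBall ball_subset_closedBall
  simpa only [sq, bidisc, smul_eq_mul] using
    stmt3_general hδ hδ (hr.mono (hsub.trans hU)) (hbdd.mono (image_mono hsub))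
end

section
/- Let μ ∈ ℂ \ {0} and let R be a holomorphic function on an open neighbourhood of (0,0) ∈ ℂ². Then there exist an open neighbourhood W of (0,0) in ℂ², a holomorphic function f on a neighbourhood of 0 ∈ ℂ, and a holomorphic function η on W with η(0,0) = 0, such that for all (z,ζ) ∈ W: R(z,ζ) = f(iμ·z·ζ) + iμ·(z·∂η/∂z(z,ζ) − ζ·∂η/∂ζ(z,ζ)). -/
open Complex

/-!
Let `φ_θ (z, ζ) = (e^{iθ} z, e^{-iθ} ζ)` be the Hamiltonian flow of `zζ`, and average `R` along it:
`A = (2π)⁻¹ ∫ R ∘ φ_θ dθ` and `P = (2π)⁻¹ ∫ θ R ∘ φ_θ dθ`, the integrals being over `[0, 2π]`.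
The first average keeps a monomial `z^m ζ^n` if `m = n` and kills it otherwise, while the second one
divides it by `i (m - n)` if `m ≠ n`. So `A` collects the diagonal terms of the power series
of `R` and `P` solves the equation for the others, without any series having to be summed.
Differentiating `P` along the flow gives `i (z ∂_z P - ζ ∂_ζ P) = R - A`, and moving the circle of
integration shows that `A` is invariant under `(z, ζ) ↦ (c z, c⁻¹ ζ)` for complex `c`. On the axes
`A = R(0, 0)` by the mean value property, so `A` is a function of `zζ`.
-/

open Set Metric Filter MeasureTheory Real

section HolomorphicParameter

variable {H E : Type*} [NormedAddCommGroup H] [NormedSpace ℂ H]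
  [NormedAddCommGroup E] [NormedSpace ℂ E] {U : Set H} {x : H}

theorem continuousOn_fderiv_of_continuousOn_uncurry [ProperSpace H] {X : Type*}
    [TopologicalSpace X] {F : X → H → E} {S : Set X} (hU : IsOpen U)
    (hF : ContinuousOn F.uncurry (S ×ˢ U)) (hd : ∀ t ∈ S, DifferentiableOn ℂ (F t) U) (hx : x ∈ U) :
    ContinuousOn (fun t ↦ fderiv ℂ (F t) x) S := by
  intro t₀ ht₀
  obtain ⟨δ, hδ, hδU⟩ := nhds_basis_closedBall.mem_iff.1 (hU.mem_nhds hx)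
  have hdiff : ∀ t ∈ S, DifferentiableAt ℂ (F t) x := fun t ht ↦
    (hd t ht).differentiableAt (hU.mem_nhds hx)
  refine Metric.tendsto_nhds.2 fun ε hε ↦ ?_
  obtain ⟨v, hv, hclose⟩ := (isCompact_closedBall x δ).mem_uniformity_of_prod
    (hF.mono (prod_mono_right hδU)) ht₀ (dist_mem_uniformity (show 0 < ε * δ / 4 by positivity))
  filter_upwards [hv, self_mem_nhdsWithin] with t htv htS
  have hmaps : MapsTo (F t - F t₀) (ball x δ) (closedBall ((F t - F t₀) x) (ε * δ / 2)) := by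
    intro y hy
    have hy' := hclose t htv y (ball_subset_closedBall hy)
    have hx' := hclose t htv x (mem_closedBall_self hδ.le)
    simp only [mem_ofPred_eq, dist_eq_norm] at hy' hx'
    rw [mem_closedBall, dist_eq_norm]
    exact (norm_sub_le _ _).trans (by simpa using by linarith)
  have hsub : DifferentiableOn ℂ (F t - F t₀) (ball x δ) :=
    ((hd t htS).sub (hd t₀ ht₀)).mono (ball_subset_closedBall.trans hδU)
  calc dist (fderiv ℂ (F t) x) (fderiv ℂ (F t₀) x)
      = ‖fderiv ℂ (F t - F t₀) x‖ := by
        rw [dist_eq_norm, fderiv_sub (hdiff t htS) (hdiff t₀ ht₀)]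
    _ ≤ ε * δ / 2 / δ := norm_fderiv_le_div_of_mapsTo_ball hsub hmaps hδ
    _ < ε := by field_simp; linarith

theorem exists_ball_norm_fderiv_le_of_isCompact {X : Type*} [TopologicalSpace X]
    {F : X → H → E} {S : Set X} (hS : IsCompact S) (hU : IsOpen U)
    (hF : ContinuousOn F.uncurry (S ×ˢ U))
    (hd : ∀ t ∈ S, DifferentiableOn ℂ (F t) U) (hx : x ∈ U) :
    ∃ δ > 0, ball x δ ⊆ U ∧ ∃ C, ∀ t ∈ S, ∀ y ∈ ball x δ, ‖fderiv ℂ (F t) y‖ ≤ C := by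
  have hswap : ContinuousOn (fun y t ↦ F t y).uncurry (U ×ˢ S) :=
    hF.comp continuous_swap.continuousOn fun _ h ↦ ⟨h.2, h.1⟩
  obtain ⟨v, hv, hclose⟩ := hS.mem_uniformity_of_prod hswap hx (dist_mem_uniformity one_pos)
  rw [hU.nhdsWithin_eq hx] at hv
  obtain ⟨ε, hε, hball⟩ := Metric.mem_nhds_iff.1 (inter_mem hv (hU.mem_nhds hx))
  refine ⟨ε / 2, half_pos hε, (ball_subset_ball (half_le_self hε.le)).trans
    fun y hy ↦ (hball hy).2, 2 / (ε / 2), fun t ht y hy ↦ ?_⟩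
  have hsub : ball y (ε / 2) ⊆ ball x ε := ball_subset_ball' (by rw [mem_ball] at hy; linarith)
  refine norm_fderiv_le_div_of_mapsTo_ball
    ((hd t ht).mono fun w hw ↦ (hball (hsub hw)).2) (fun w hw ↦ ?_) (half_pos hε)
  have hwx := hclose w (hball (hsub hw)).1 t ht
  have hyx := hclose y (hball (hsub (mem_ball_self (half_pos hε)))).1 t ht
  simp only [mem_ofPred_eq] at hwx hyx
  rw [mem_closedBall]
  linarith [dist_triangle_right (F t w) (F t y) (F t x)]

theorem differentiableOn_intervalIntegral_of_continuousOn [ProperSpace H]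
    {F : ℝ → H → E} {a b : ℝ} (hU : IsOpen U) (hF : ContinuousOn F.uncurry (uIcc a b ×ˢ U))
    (hd : ∀ t ∈ uIcc a b, DifferentiableOn ℂ (F t) U) :
    DifferentiableOn ℂ (fun y ↦ ∫ t in a..b, F t y) U := by
  intro x hx
  obtain ⟨δ, hδ, hδU, C, hC⟩ := exists_ball_norm_fderiv_le_of_isCompact isCompact_uIcc hU hF hd hx
  have hFint : ∀ y ∈ U, IntervalIntegrable (fun t ↦ F t y) volume a b := fun y hy ↦
    (hF.comp (by fun_prop) fun t ht ↦ ⟨ht, hy⟩ :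
      ContinuousOn (fun t ↦ F.uncurry (t, y)) (uIcc a b)).intervalIntegrable
  have hF'int : IntervalIntegrable (fun t ↦ fderiv ℂ (F t) x) volume a b :=
    (continuousOn_fderiv_of_continuousOn_uncurry hU hF hd hx).intervalIntegrable
  have hderiv : ∀ t ∈ uIcc a b, ∀ y ∈ ball x δ, HasFDerivAt (F t) (fderiv ℂ (F t) y) y :=
    fun t ht y hy ↦ ((hd t ht).differentiableAt (hU.mem_nhds (hδU hy))).hasFDerivAt
  exact (intervalIntegral.hasFDerivAt_integral_of_dominated_of_fderiv_le
    (F' := fun y t ↦ fderiv ℂ (F t) y) (bound := fun _ ↦ C) (ball_mem_nhds x hδ)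
    (eventually_of_mem (hU.mem_nhds hx) fun y hy ↦ (hFint y hy).def'.aestronglyMeasurable)
    (hFint x hx) hF'int.def'.aestronglyMeasurable
    (.of_forall fun t ht ↦ hC t (uIoc_subset_uIcc ht)) intervalIntegrable_const
    (.of_forall fun t ht ↦ hderiv t (uIoc_subset_uIcc ht))).differentiableAt.differentiableWithinAt

end HolomorphicParameter

section CircleAverage

variable {E : Type*} [NormedAddCommGroup E]

theorem circleAverage_comp_mul_left [NormedSpace ℝ E] (f : ℂ → E) (c : ℂ) :
    circleAverage (fun w ↦ f (c * w)) 0 1 = circleAverage f 0 ‖c‖ := by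
  rw [circleAverage_eq_integral_add (f := f) (arg c), circleAverage_def]
  congr! 3 with θ
  have hc : c = circleMap 0 ‖c‖ (arg c) := by rw [circleMap_zero, norm_mul_exp_arg_mul_I]
  nth_rw 1 [hc]
  rw [circleMap_zero_mul, mul_one, add_comm]

theorem circleAverage_eq_of_differentiableAt_annulus [NormedSpace ℂ E]
    {f : ℂ → E} {c : ℂ} {a b : ℝ} (ha : 0 < a) (hb : 0 < b)
    (hf : ∀ w, ‖w - c‖ ∈ uIcc a b → DifferentiableAt ℂ f w) :
    circleAverage f c a = circleAverage f c b := by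
  wlog hab : a ≤ b generalizing a b
  · exact (this hb ha (by rwa [uIcc_comm]) (le_of_not_ge hab)).symm
  have hd : ∀ w ∈ closedBall c b \ ball c a, DifferentiableAt ℂ f w := by
    intro w hw
    rw [Set.mem_sdiff, mem_closedBall, mem_ball, not_lt, dist_eq_norm] at hw
    exact hf w (Icc_subset_uIcc ⟨hw.2, hw.1⟩)
  rw [circleAverage_eq_circleIntegral ha.ne', circleAverage_eq_circleIntegral hb.ne',
    circleIntegral_sub_center_inv_smul_eq_of_differentiable_on_annulus_off_countable ha hab
      countable_empty (fun w hw ↦ (hd w hw).continuousAt.continuousWithinAt)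
      fun w hw ↦ hd w ⟨ball_subset_closedBall hw.1.1,
        fun h ↦ hw.1.2 (ball_subset_closedBall h)⟩]

theorem circleAverage_comp_smul_eq_apply_zero [NormedSpace ℂ E] [CompleteSpace E] {V : Type*}
    [NormedAddCommGroup V] [NormedSpace ℂ V] {f : V → E} {r : ℝ}
    (hf : DifferentiableOn ℂ f (ball 0 r)) {v : V} (hv : v ∈ ball 0 r) :
    circleAverage (fun w : ℂ ↦ f (w • v)) 0 1 = f 0 := by
  have hmaps : MapsTo (fun w : ℂ ↦ w • v) (closedBall 0 1) (ball 0 r) := by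
    intro w hw
    rw [mem_closedBall_zero_iff] at hw
    rw [mem_ball_zero_iff] at hv ⊢
    exact (norm_smul_le w v).trans_lt
      ((mul_le_of_le_one_left (norm_nonneg v) hw).trans_lt hv)
  have hdiff : DifferentiableOn ℂ (fun w : ℂ ↦ f (w • v)) (closedBall 0 1) :=
    hf.comp (by fun_prop) hmaps
  rw [(hdiff.diffContOnCl_ball (by simp)).circleAverage, zero_smul]

end CircleAverage

section Calculus

theorem hasDerivAt_integral_smul_comp_add_of_periodic {E : Type*} [NormedAddCommGroup E]
    [NormedSpace ℝ E] [CompleteSpace E] {g : ℝ → E} {T : ℝ} (hg : Continuous g)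
    (hT : Function.Periodic g T) (t : ℝ) :
    HasDerivAt (fun t ↦ ∫ s in 0..T, s • g (s + t)) (T • g t - ∫ s in 0..T, g s) t := by
  have hsg : Continuous fun s ↦ s • g s := by fun_prop
  set G : ℝ → E := fun u ↦ ∫ s in 0..u, s • g s
  have hG (u : ℝ) : HasDerivAt G (u • g u) u := hsg.integral_hasStrictDerivAt 0 u |>.hasDerivAt
  have hshift (t : ℝ) :
      ∫ s in 0..T, s • g (s + t) = G (t + T) - G t - t • ∫ s in 0..T, g s := by
    calc ∫ s in 0..T, s • g (s + t)
        = ∫ s in 0..T, (fun u ↦ u • g u - t • g u) (s + t) := by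
          simp only [← sub_smul, add_sub_cancel_right]
      _ = ∫ u in t..t + T, (u • g u - t • g u) := by
          rw [intervalIntegral.integral_comp_add_right (fun u ↦ u • g u - t • g u), zero_add,
            add_comm T]
      _ = (∫ u in t..t + T, u • g u) - t • ∫ u in t..t + T, g u := by
          rw [← intervalIntegral.integral_smul]
          exact intervalIntegral.integral_sub (hsg.intervalIntegrable _ _)
            ((hg.const_smul t).intervalIntegrable _ _)
      _ = G (t + T) - G t - t • ∫ s in 0..T, g s := by
          rw [intervalIntegral.integral_interval_sub_left (hsg.intervalIntegrable _ _)
            (hsg.intervalIntegrable _ _), hT.intervalIntegral_add_eq t 0, zero_add]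
  simp only [hshift]
  refine ((((hG (t + T)).comp_add_const t T).sub (hG t)).sub
    ((hasDerivAt_id t).smul_const _)).congr_deriv ?_
  rw [hT t, add_smul, one_smul, add_sub_cancel_left]

theorem fderiv_prodMk_apply {𝕜 E : Type*} [NontriviallyNormedField 𝕜] [NormedAddCommGroup E]
    [NormedSpace 𝕜 E] {f : 𝕜 × 𝕜 → E} {z ζ : 𝕜} (hf : DifferentiableAt 𝕜 f (z, ζ)) (a b : 𝕜) :
    fderiv 𝕜 f (z, ζ) (a, b) =
      a • deriv (fun w ↦ f (w, ζ)) z + b • deriv (fun w ↦ f (z, w)) ζ := by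
  have h₁ : deriv (fun w ↦ f (w, ζ)) z = fderiv 𝕜 f (z, ζ) (1, 0) :=
    (hf.hasFDerivAt.comp_hasDerivAt z ((hasDerivAt_id z).prodMk (hasDerivAt_const z ζ))).deriv
  have h₂ : deriv (fun w ↦ f (z, w)) ζ = fderiv 𝕜 f (z, ζ) (0, 1) :=
    (hf.hasFDerivAt.comp_hasDerivAt ζ ((hasDerivAt_const ζ z).prodMk (hasDerivAt_id ζ))).deriv
  rw [h₁, h₂, ← map_smul, ← map_smul, ← map_add]
  simp

end Calculus

/-- The flow `(z, ζ) ↦ (w z, w⁻¹ ζ)` of the Hamiltonian vector field of `zζ`, in the multiplicative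
complex time `w`. -/
noncomputable def hyperbolicScale (w : ℂ) (p : ℂ × ℂ) : ℂ × ℂ :=
  (w * p.1, w⁻¹ * p.2)

section HyperbolicScale

theorem hyperbolicScale_hyperbolicScale (w w' : ℂ) (p : ℂ × ℂ) :
    hyperbolicScale w (hyperbolicScale w' p) = hyperbolicScale (w * w') p := by
  simp only [hyperbolicScale, mul_inv, mul_assoc]

theorem differentiable_hyperbolicScale (w : ℂ) : Differentiable ℂ (hyperbolicScale w) := by
  unfold hyperbolicScale
  fun_prop

theorem differentiableAt_hyperbolicScale_left {w : ℂ} (hw : w ≠ 0) (p : ℂ × ℂ) :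
    DifferentiableAt ℂ (fun w ↦ hyperbolicScale w p) w := by
  unfold hyperbolicScale
  fun_prop (disch := exact hw)

theorem norm_hyperbolicScale_of_norm_eq_one {w : ℂ} (hw : ‖w‖ = 1) (p : ℂ × ℂ) :
    ‖hyperbolicScale w p‖ = ‖p‖ := by
  simp [hyperbolicScale, Prod.norm_def, hw]

theorem norm_hyperbolicScale_le_max {w c : ℂ} (hc : c ≠ 0) (hw : ‖w‖ ∈ uIcc 1 ‖c‖) (p : ℂ × ℂ) :
    ‖hyperbolicScale w p‖ ≤ max ‖p‖ ‖hyperbolicScale c p‖ := by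
  have hw_inv : ‖w‖⁻¹ ≤ max 1 ‖c‖⁻¹ := by
    rcases mem_uIcc.1 hw with h | h
    · exact le_max_of_le_left (inv_le_one_of_one_le₀ h.1)
    · exact le_max_of_le_right (inv_anti₀ (norm_pos_iff.2 hc) h.1)
  have hfst : ‖w‖ * ‖p.1‖ ≤ max ‖p.1‖ (‖c‖ * ‖p.1‖) := by
    simpa [max_mul_of_nonneg] using mul_le_mul_of_nonneg_right hw.2 (norm_nonneg p.1)
  have hsnd : ‖w‖⁻¹ * ‖p.2‖ ≤ max ‖p.2‖ (‖c‖⁻¹ * ‖p.2‖) := by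
    simpa [max_mul_of_nonneg] using mul_le_mul_of_nonneg_right hw_inv (norm_nonneg p.2)
  simp only [hyperbolicScale, Prod.norm_def, norm_mul, norm_inv]
  rw [max_max_max_comm]
  exact max_le_max hfst hsnd

theorem continuous_hyperbolicScale_circleMap :
    Continuous fun q : ℝ × (ℂ × ℂ) ↦ hyperbolicScale (circleMap 0 1 q.1) q.2 := by
  unfold hyperbolicScale
  have (q : ℝ × (ℂ × ℂ)) : circleMap 0 1 q.1 ≠ 0 := circleMap_ne_center one_ne_zero
  fun_prop (disch := assumption)

theorem hasDerivAt_hyperbolicScale_circleMap_zero (z ζ : ℂ) :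
    HasDerivAt (fun θ ↦ hyperbolicScale (circleMap 0 1 θ) (z, ζ)) (I • (z, -ζ)) 0 := by
  have h := hasDerivAt_circleMap 0 1 0
  have h0 : circleMap 0 1 0 = 1 := by simp [circleMap_zero]
  refine ((h.mul_const z).prodMk ((h.inv (by simp [h0])).mul_const ζ)).congr_deriv ?_
  simp [h0]

end HyperbolicScale

section OrbitAverages

variable {E : Type*} [NormedAddCommGroup E] [NormedSpace ℂ E]

/-- The average of `R` over the orbit of `p` under the circle action `hyperbolicScale`; it retains
the diagonal terms of the power series of `R`. -/
noncomputable def orbitMean (R : ℂ × ℂ → E) (p : ℂ × ℂ) : E :=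
  circleAverage (fun w ↦ R (hyperbolicScale w p)) 0 1

/-- The average of `R` over the orbit of `p` weighted by the time `θ ∈ [0, 2π]`: an antiderivative
of `R - orbitMean R` along the circle action `hyperbolicScale`. -/
noncomputable def orbitPrimitive (R : ℂ × ℂ → E) (p : ℂ × ℂ) : E :=
  (2 * π)⁻¹ • ∫ θ in 0..2 * π, θ • R (hyperbolicScale (circleMap 0 1 θ) p)

variable {R : ℂ × ℂ → E} {r : ℝ}

theorem hyperbolicScale_circleMap_mem_ball {p : ℂ × ℂ} (hp : p ∈ ball 0 r) (θ : ℝ) :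
    hyperbolicScale (circleMap 0 1 θ) p ∈ ball 0 r := by
  rw [mem_ball_zero_iff] at hp ⊢
  rwa [norm_hyperbolicScale_of_norm_eq_one (by simp)]

theorem differentiableOn_integral_smul_comp_hyperbolicScale {K : ℝ → ℝ} (hK : Continuous K)
    (hR : DifferentiableOn ℂ R (ball 0 r)) (a b : ℝ) :
    DifferentiableOn ℂ
      (fun p ↦ ∫ θ in a..b, K θ • R (hyperbolicScale (circleMap 0 1 θ) p)) (ball 0 r) := by
  refine differentiableOn_intervalIntegral_of_continuousOn isOpen_ball ?_ fun θ _ ↦ ?_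
  · exact (hK.comp continuous_fst).continuousOn.smul (hR.continuousOn.comp
      continuous_hyperbolicScale_circleMap.continuousOn
      fun q hq ↦ hyperbolicScale_circleMap_mem_ball hq.2 q.1)
  · exact (hR.comp (differentiable_hyperbolicScale _).differentiableOn
      fun p hp ↦ hyperbolicScale_circleMap_mem_ball hp θ).const_smul (K θ)

theorem differentiableOn_orbitMean (hR : DifferentiableOn ℂ R (ball 0 r)) :
    DifferentiableOn ℂ (orbitMean R) (ball 0 r) := by
  have h := differentiableOn_integral_smul_comp_hyperbolicScale continuous_one hR 0 (2 * π)
  simp only [Pi.one_apply, one_smul] at h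
  exact h.const_smul (2 * π)⁻¹

theorem differentiableOn_orbitPrimitive (hR : DifferentiableOn ℂ R (ball 0 r)) :
    DifferentiableOn ℂ (orbitPrimitive R) (ball 0 r) :=
  (differentiableOn_integral_smul_comp_hyperbolicScale continuous_id hR 0 (2 * π)).const_smul
    (2 * π)⁻¹

theorem orbitMean_hyperbolicScale (hR : DifferentiableOn ℂ R (ball 0 r)) {c : ℂ} (hc : c ≠ 0)
    {p : ℂ × ℂ} (hp : p ∈ ball 0 r) (hcp : hyperbolicScale c p ∈ ball 0 r) :
    orbitMean R (hyperbolicScale c p) = orbitMean R p := by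
  have hdiff : ∀ w, ‖w - 0‖ ∈ uIcc 1 ‖c‖ →
      DifferentiableAt ℂ (fun w ↦ R (hyperbolicScale w p)) w := by
    intro w hw
    rw [sub_zero] at hw
    have hw0 : w ≠ 0 := norm_pos_iff.1 ((lt_min one_pos (norm_pos_iff.2 hc)).trans_le hw.1)
    have hwp : hyperbolicScale w p ∈ ball 0 r := by
      rw [mem_ball_zero_iff] at *
      exact (norm_hyperbolicScale_le_max hc hw p).trans_lt (max_lt hp hcp)
    exact (hR.differentiableAt (isOpen_ball.mem_nhds hwp)).comp w
      (differentiableAt_hyperbolicScale_left hw0 p)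
  calc orbitMean R (hyperbolicScale c p)
      = circleAverage (fun w ↦ R (hyperbolicScale (c * w) p)) 0 1 := by
        simp only [orbitMean, hyperbolicScale_hyperbolicScale, mul_comm c]
    _ = circleAverage (fun w ↦ R (hyperbolicScale w p)) 0 ‖c‖ :=
        circleAverage_comp_mul_left (fun w ↦ R (hyperbolicScale w p)) c
    _ = orbitMean R p :=
        (circleAverage_eq_of_differentiableAt_annulus one_pos (norm_pos_iff.2 hc) hdiff).symm

variable [CompleteSpace E]

theorem orbitMean_eq_apply_zero_of_mul_eq_zero (hR : DifferentiableOn ℂ R (ball 0 r)) {p : ℂ × ℂ}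
    (hp : p ∈ ball 0 r) (h : p.1 * p.2 = 0) : orbitMean R p = R 0 := by
  obtain ⟨z, ζ⟩ := p
  rcases mul_eq_zero.1 h with rfl | rfl
  · calc orbitMean R (0, ζ)
        = circleAverage (fun w ↦ R (w⁻¹ • (0, ζ))) 0 1 := by simp [orbitMean, hyperbolicScale]
      _ = circleAverage (fun w : ℂ ↦ R (w • (0, ζ))) 0 1 :=
          circleAverage_zero_one_congr_inv (f := fun w : ℂ ↦ R (w • (0, ζ)))
      _ = R 0 := circleAverage_comp_smul_eq_apply_zero hR hp
  · calc orbitMean R (z, 0)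
        = circleAverage (fun w : ℂ ↦ R (w • (z, 0))) 0 1 := by simp [orbitMean, hyperbolicScale]
      _ = R 0 := circleAverage_comp_smul_eq_apply_zero hR hp

theorem orbitMean_eq_of_mul_eq (hR : DifferentiableOn ℂ R (ball 0 r)) {p q : ℂ × ℂ}
    (hp : p ∈ ball 0 r) (hq : q ∈ ball 0 r) (h : p.1 * p.2 = q.1 * q.2) :
    orbitMean R p = orbitMean R q := by
  by_cases h0 : p.1 * p.2 = 0
  · rw [orbitMean_eq_apply_zero_of_mul_eq_zero hR hp h0,
      orbitMean_eq_apply_zero_of_mul_eq_zero hR hq (h ▸ h0)]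
  · have hp0 : p.1 ≠ 0 := left_ne_zero_of_mul h0
    have hq0 : q.1 ≠ 0 := left_ne_zero_of_mul (h ▸ h0)
    have hscale : hyperbolicScale (q.1 / p.1) p = q := by
      refine Prod.ext (div_mul_cancel₀ _ hp0) ?_
      change (q.1 / p.1)⁻¹ * p.2 = q.2
      rw [inv_div, div_mul_eq_mul_div, h, mul_div_cancel_left₀ _ hq0]
    rw [← orbitMean_hyperbolicScale hR (div_ne_zero hq0 hp0) hp (hscale.symm ▸ hq), hscale]

theorem exists_orbitMean_eq_comp_mul (hR : DifferentiableOn ℂ R (ball 0 r)) {ρ : ℝ} (hρ : 0 < ρ)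
    (hρr : ρ < r) :
    ∃ g : ℂ → E, DifferentiableOn ℂ g (ball 0 (ρ * ρ)) ∧
      ∀ z ζ : ℂ, (z, ζ) ∈ ball 0 ρ → z * ζ ∈ ball 0 (ρ * ρ) ∧ orbitMean R (z, ζ) = g (z * ζ) := by
  have hρ0 : (ρ : ℂ) ≠ 0 := ofReal_ne_zero.2 hρ.ne'
  have hslice : MapsTo (fun q : ℂ ↦ ((ρ : ℂ), q / ρ)) (ball 0 (ρ * ρ)) (ball 0 r) := by
    intro q hq
    rw [mem_ball_zero_iff] at hq ⊢
    have hq' : ‖q‖ / ρ < r := ((div_lt_iff₀ hρ).2 hq).trans hρr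
    simp [Prod.norm_def, abs_of_pos hρ, hρr, hq']
  refine ⟨fun q ↦ orbitMean R (ρ, q / ρ),
    (differentiableOn_orbitMean hR).comp (by fun_prop) hslice, fun z ζ hp ↦ ?_⟩
  have hmul : z * ζ ∈ ball 0 (ρ * ρ) := by
    rw [mem_ball_zero_iff, Prod.norm_def, max_lt_iff] at hp
    rw [mem_ball_zero_iff, norm_mul]
    exact mul_lt_mul'' hp.1 hp.2 (norm_nonneg _) (norm_nonneg _)
  exact ⟨hmul, orbitMean_eq_of_mul_eq hR (ball_subset_ball hρr.le hp) (hslice hmul)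
    (mul_div_cancel₀ _ hρ0).symm⟩

theorem fderiv_orbitPrimitive_apply (hR : DifferentiableOn ℂ R (ball 0 r)) {z ζ : ℂ}
    (hp : (z, ζ) ∈ ball 0 r) :
    fderiv ℂ (orbitPrimitive R) (z, ζ) (I • (z, -ζ)) = R (z, ζ) - orbitMean R (z, ζ) := by
  set g : ℝ → E := fun θ ↦ R (hyperbolicScale (circleMap 0 1 θ) (z, ζ))
  have hflow : Continuous fun θ ↦ hyperbolicScale (circleMap 0 1 θ) (z, ζ) :=
    continuous_hyperbolicScale_circleMap.curry_left
  have hg : Continuous g :=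
    hR.continuousOn.comp_continuous hflow (hyperbolicScale_circleMap_mem_ball hp)
  have hgper : Function.Periodic g (2 * π) := fun θ ↦ by
    simp only [g, periodic_circleMap 0 1 θ]
  have hscale0 : hyperbolicScale (circleMap 0 1 0) (z, ζ) = (z, ζ) := by
    simp [hyperbolicScale, circleMap_zero]
  have horbit (t : ℝ) : orbitPrimitive R (hyperbolicScale (circleMap 0 1 t) (z, ζ)) =
      (2 * π)⁻¹ • ∫ s in 0..2 * π, s • g (s + t) := by
    simp only [orbitPrimitive, g, hyperbolicScale_hyperbolicScale, circleMap_zero_mul, one_mul]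
  have hchain : HasDerivAt
      (fun t ↦ orbitPrimitive R (hyperbolicScale (circleMap 0 1 t) (z, ζ)))
      (fderiv ℂ (orbitPrimitive R) (z, ζ) (I • (z, -ζ))) 0 := by
    have hP := ((differentiableOn_orbitPrimitive hR).differentiableAt
      (isOpen_ball.mem_nhds hp)).hasFDerivAt.restrictScalars ℝ
    exact hP.comp_hasDerivAt_of_eq 0 (hasDerivAt_hyperbolicScale_circleMap_zero z ζ) hscale0.symm
  rw [funext horbit] at hchain
  have hintegral := (hasDerivAt_integral_smul_comp_add_of_periodic hg hgper 0).const_smul (2 * π)⁻¹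
  rw [hchain.unique hintegral, smul_sub, inv_smul_smul₀ two_pi_pos.ne']
  simp only [g, hscale0, orbitMean, circleAverage_def]

theorem I_smul_smul_deriv_orbitPrimitive_sub (hR : DifferentiableOn ℂ R (ball 0 r)) {z ζ : ℂ}
    (hp : (z, ζ) ∈ ball 0 r) :
    I • (z • deriv (fun w ↦ orbitPrimitive R (w, ζ)) z -
      ζ • deriv (fun w ↦ orbitPrimitive R (z, w)) ζ) = R (z, ζ) - orbitMean R (z, ζ) := by
  rw [← fderiv_orbitPrimitive_apply hR hp, map_smul, fderiv_prodMk_apply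
    ((differentiableOn_orbitPrimitive hR).differentiableAt (isOpen_ball.mem_nhds hp)),
    neg_smul, sub_eq_add_neg]

end OrbitAverages

theorem stmt4_general {E : Type*} [NormedAddCommGroup E] [NormedSpace ℂ E] [CompleteSpace E]
    (μ : ℂ) (hμ : μ ≠ 0)
    (U : Set (ℂ × ℂ)) (hU : IsOpen U) (h0U : (0 : ℂ × ℂ) ∈ U)
    (R : ℂ × ℂ → E) (hR : DifferentiableOn ℂ R U) :
    ∃ (W : Set (ℂ × ℂ)) (Vf : Set ℂ) (f : ℂ → E) (η : ℂ × ℂ → E),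
      IsOpen W ∧ (0 : ℂ × ℂ) ∈ W ∧
      IsOpen Vf ∧ (0 : ℂ) ∈ Vf ∧
      DifferentiableOn ℂ f Vf ∧
      DifferentiableOn ℂ η W ∧ η (0, 0) = 0 ∧
      ∀ z ζ : ℂ, (z, ζ) ∈ W →
        I * μ * z * ζ ∈ Vf ∧
        R (z, ζ) = f (I * μ * z * ζ) + (I * μ) •
          (z • deriv (fun w ↦ η (w, ζ)) z - ζ • deriv (fun w ↦ η (z, w)) ζ) := by
  obtain ⟨r, hr, hrU⟩ := Metric.isOpen_iff.1 hU 0 h0U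
  replace hR := hR.mono hrU
  obtain ⟨ρ, hρ, hρr⟩ := exists_between hr
  obtain ⟨g, hg, hmean⟩ := exists_orbitMean_eq_comp_mul hR hρ hρr
  have hdiv : Differentiable ℂ fun q ↦ q / (I * μ) := by fun_prop
  refine ⟨ball 0 ρ, (· / (I * μ)) ⁻¹' ball 0 (ρ * ρ), fun q ↦ g (q / (I * μ)),
    fun p ↦ μ⁻¹ • (orbitPrimitive R p - orbitPrimitive R (0, 0)), isOpen_ball, mem_ball_self hρ,
    isOpen_ball.preimage hdiv.continuous, by simpa using hρ.ne',
    hg.comp hdiv.differentiableOn (mapsTo_preimage _ _),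
    (((differentiableOn_orbitPrimitive hR).mono (ball_subset_ball hρr.le)).sub_const _).const_smul
      _, by simp, fun z ζ hp ↦ ?_⟩
  obtain ⟨hmem, hmean⟩ := hmean z ζ hp
  have hcancel : I * μ * z * ζ / (I * μ) = z * ζ := by
    rw [mul_assoc, mul_div_cancel_left₀ _ (mul_ne_zero I_ne_zero hμ)]
  refine ⟨by rwa [mem_preimage, hcancel], ?_⟩
  simp only [deriv_fun_const_smul_field, deriv_sub_const]
  rw [hcancel, ← hmean, smul_comm z, smul_comm ζ, ← smul_sub, mul_smul, smul_inv_smul₀ hμ,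
    I_smul_smul_deriv_orbitPrimitive_sub hR (ball_subset_ball hρr.le hp), add_sub_cancel]

/-- The homological equation: any holomorphic R near (0,0) ∈ ℂ² can be written as
R(z,ζ) = f(iμzζ) + iμ(z∂_zη − ζ∂_ζη) with η(0,0) = 0. -/
theorem stmt4
    (μ : ℂ) (hμ : μ ≠ 0)
    (U : Set (ℂ × ℂ)) (hU : IsOpen U) (h0U : (0 : ℂ × ℂ) ∈ U)
    (R : ℂ × ℂ → ℂ) (hR : DifferentiableOn ℂ R U) :
    ∃ (W : Set (ℂ × ℂ)) (Vf : Set ℂ) (f : ℂ → ℂ) (η : ℂ × ℂ → ℂ),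
      IsOpen W ∧ (0 : ℂ × ℂ) ∈ W ∧
      IsOpen Vf ∧ (0 : ℂ) ∈ Vf ∧
      DifferentiableOn ℂ f Vf ∧
      DifferentiableOn ℂ η W ∧ η (0, 0) = 0 ∧
      ∀ z ζ : ℂ, (z, ζ) ∈ W →
        Complex.I * μ * z * ζ ∈ Vf ∧
        R (z, ζ) = f (Complex.I * μ * z * ζ) + Complex.I * μ *
          (z * deriv (fun w => η (w, ζ)) z - ζ * deriv (fun w => η (z, w)) ζ) := by
  simpa only [smul_eq_mul] using stmt4_general μ hμ U hU h0U R hR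
end
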